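/- arXiv:2603.24336 — 13 statements merged into one kernel-verified Lean document; each statement's English description precedes it below -/
import Mathlib

section
/- Let (M,d) be a metric space, Y ⊆ M a nonempty subset, x ∈ M, and ε ∈ (0,1/2). Let π ∈ Y be a nearest point of Y to x, i.e. d(x,π) ≤ d(x,y) for all y ∈ Y, and write d(x,Y) := d(x,π). Let N be an ε·d(x,Y)-net of B(π, d(x,Y)/ε) ∩ Y with π ∈ N. Define d̂(x,y) := inf_{u ∈ N} ( d(x,u) + d(u,y) ) for y ∈ Y. Then for every y ∈ Y: d(x,y) ≤ d̂(x,y) ≤ (1+4ε)·d(x,y). -/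
/-!
The lower bound is the triangle inequality through each `u ∈ N`. For the upper bound a single proxy
suffices. If `y` lies in the ball around `π`, a net point `u` within `ε * dist x π` of `y` costs at
most `2 * ε * dist x π ≤ 2 * ε * dist x y` extra. If `y` lies outside, the proxy `π` costs at most
`2 * dist x π` extra, and `dist x π < ε * dist π y ≤ ε * (dist x π + dist x y)` with `ε < 1/2`
gives `dist x π ≤ 2 * ε * dist x y`.
-/


/-- Dimension reduction with proxy sets (simple form).
If `π ∈ Y` is a nearest point of `Y` to `x`, and `N` is an `ε·d(x,Y)`-net of
`B(π, d(x,Y)/ε) ∩ Y` containing `π`, then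
`d̂(x,y) := inf_{u∈N} (d(x,u)+d(u,y))` approximates `d(x,y)` within `(1+4ε)`. -/
theorem stmt0 {M : Type*} [MetricSpace M] (Y : Set M) (hY : Y.Nonempty)
    (x : M) (ε : ℝ) (hε : ε ∈ Set.Ioo (0 : ℝ) (1/2))
    (π : M) (hπY : π ∈ Y) (hπnear : ∀ y ∈ Y, dist x π ≤ dist x y)
    (N : Set M)
    (hNsub : N ⊆ Metric.closedBall π (dist x π / ε) ∩ Y)
    (hNpack : ∀ u ∈ N, ∀ v ∈ N, u ≠ v → ε * dist x π ≤ dist u v)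
    (hNcover : ∀ p ∈ Metric.closedBall π (dist x π / ε) ∩ Y,
      ∃ u ∈ N, dist p u ≤ ε * dist x π)
    (hπN : π ∈ N)
    (y : M) (hy : y ∈ Y) :
    dist x y ≤ sInf {r : ℝ | ∃ u ∈ N, r = dist x u + dist u y} ∧
    sInf {r : ℝ | ∃ u ∈ N, r = dist x u + dist u y} ≤ (1 + 4 * ε) * dist x y := by
  obtain ⟨hε0, hε1⟩ := hε
  have hD := dist_nonneg (x := x) (y := π)
  have hDy := hπnear y hy
  have hlb : ∀ r ∈ {r : ℝ | ∃ u ∈ N, r = dist x u + dist u y}, dist x y ≤ r := by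
    rintro r ⟨u, -, rfl⟩
    exact dist_triangle x u y
  have hle : ∀ u ∈ N,
      sInf {r : ℝ | ∃ u ∈ N, r = dist x u + dist u y} ≤ dist x u + dist u y :=
    fun u hu => csInf_le ⟨dist x y, hlb⟩ ⟨u, hu, rfl⟩
  refine ⟨le_csInf ⟨_, π, hπN, rfl⟩ hlb, ?_⟩
  by_cases hball : dist y π ≤ dist x π / ε
  · obtain ⟨u, hu, huy⟩ := hNcover y ⟨hball, hy⟩
    have h1 := dist_triangle x y u
    have h2 := dist_comm u y
    have h3 := mul_le_mul_of_nonneg_left hDy hε0.le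
    have h4 : 0 ≤ ε * dist x y := by positivity
    linarith [hle u hu]
  · rw [not_le, div_lt_iff₀ hε0] at hball
    have h1 := dist_triangle π x y
    rw [dist_comm π x, dist_comm π y] at h1
    have h2 := hle π hπN
    rw [dist_comm π y] at h2
    have h3 := mul_le_mul_of_nonneg_left h1 hε0.le
    have h4 := mul_le_mul_of_nonneg_right hε1.le hD
    linarith
end

section
/- Let (M,d) be a metric space, Y ⊆ M a nonempty subset, S ⊆ Y a nonempty subset, x ∈ M, and ε ∈ (0,1/2). Let π ∈ S be a nearest point of S to x, i.e. d(x,π) ≤ d(x,s) for all s ∈ S, and write d(x,S) := d(x,π). Let N be an ε·d(x,S)-net of B(π, d(x,S)/ε) ∩ Y (note N is nonempty since π lies in this set). Define d̂_S(x,y) := inf_{u ∈ N} ( d(x,u) + d(u,y) ) for y ∈ Y. Then for every y ∈ Y: d(x,y) ≤ d̂_S(x,y) ≤ (1+4ε)·d(x,y) + 2ε·d(x,S). -/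
/-!
The lower bound is the triangle inequality. For the upper bound, every single `u ∈ N` gives
`d̂_S(x,y) ≤ d(x,u) + d(u,y)`, so it suffices to exhibit one good `u`. Write `D = d(x,π)`.

If `d(y,π) ≤ D/ε`, take `u` within `εD` of `y`: the detour costs at most `2εD`.
Otherwise take `u` within `εD` of `π`: the detour costs at most `2D + 2εD`, and
`D/ε < d(y,π) ≤ d(x,y) + D` together with `ε < 1/2` gives `D ≤ 2ε·d(x,y)`.
-/

/-- Dimension reduction with proxy sets (advanced form).
If `π ∈ S ⊆ Y` is a nearest point of `S` to `x`, and `N` is an `ε·d(x,S)`-net of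
`B(π, d(x,S)/ε) ∩ Y`, then `d̂_S(x,y) := inf_{u∈N} (d(x,u)+d(u,y))` satisfies
`d(x,y) ≤ d̂_S(x,y) ≤ (1+4ε)·d(x,y) + 2ε·d(x,S)`. -/
theorem stmt1 {M : Type*} [MetricSpace M] (Y S : Set M)
    (hY : Y.Nonempty) (hSY : S ⊆ Y) (hS : S.Nonempty)
    (x : M) (ε : ℝ) (hε : ε ∈ Set.Ioo (0 : ℝ) (1/2))
    (π : M) (hπS : π ∈ S) (hπnear : ∀ s ∈ S, dist x π ≤ dist x s)
    (N : Set M)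
    (hNsub : N ⊆ Metric.closedBall π (dist x π / ε) ∩ Y)
    (hNpack : ∀ u ∈ N, ∀ v ∈ N, u ≠ v → ε * dist x π ≤ dist u v)
    (hNcover : ∀ p ∈ Metric.closedBall π (dist x π / ε) ∩ Y,
      ∃ u ∈ N, dist p u ≤ ε * dist x π)
    (y : M) (hy : y ∈ Y) :
    dist x y ≤ sInf {r : ℝ | ∃ u ∈ N, r = dist x u + dist u y} ∧
    sInf {r : ℝ | ∃ u ∈ N, r = dist x u + dist u y} ≤
      (1 + 4 * ε) * dist x y + 2 * ε * dist x π := by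
  obtain ⟨hε0, hε1⟩ := hε
  have hD : 0 ≤ dist x π := dist_nonneg
  have hπ : π ∈ Metric.closedBall π (dist x π / ε) ∩ Y :=
    ⟨Metric.mem_closedBall_self (by positivity), hSY hπS⟩
  obtain ⟨u₀, hu₀, hu₀d⟩ := hNcover π hπ
  have hbdd : BddBelow {r : ℝ | ∃ u ∈ N, r = dist x u + dist u y} := by
    refine ⟨dist x y, ?_⟩
    rintro r ⟨u, -, rfl⟩
    exact dist_triangle x u y
  refine ⟨?_, ?_⟩
  · refine le_csInf ⟨_, u₀, hu₀, rfl⟩ ?_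
    rintro r ⟨u, -, rfl⟩
    exact dist_triangle x u y
  · by_cases hyb : dist y π ≤ dist x π / ε
    · obtain ⟨u, hu, hud⟩ := hNcover y ⟨Metric.mem_closedBall.2 hyb, hy⟩
      refine (csInf_le hbdd ⟨u, hu, rfl⟩).trans ?_
      have h1 := dist_triangle x y u
      have h2 := dist_comm u y
      have h3 : 0 ≤ ε * dist x y := by positivity
      linarith
    · refine (csInf_le hbdd ⟨u₀, hu₀, rfl⟩).trans ?_
      rw [not_le, div_lt_iff₀ hε0] at hyb
      have h1 := dist_triangle x π u₀
      have h2 := dist_triangle u₀ π y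
      have h3 := dist_triangle y x π
      rw [dist_comm u₀ π, dist_comm π y] at h2
      rw [dist_comm y x] at h3
      have h4 : dist y π * ε ≤ (dist x y + dist x π) * ε :=
        mul_le_mul_of_nonneg_right h3 hε0.le
      have h5 : ε * dist x π ≤ 1 / 2 * dist x π :=
        mul_le_mul_of_nonneg_right hε1.le hD
      linarith
end

section
/- Let (M,d) be a metric space, X ⊆ M a finite nonempty set of clients, Y ⊆ M a finite nonempty set of facilities, and ocost : Y → ℝ_{≥0} opening costs; for nonempty F ⊆ Y let fl(X,F) := Σ_{x∈X} d(x,F) + Σ_{f∈F} ocost(f). Let ε ∈ (0,1/2) and c ≥ 1, and let S ⊆ Y be a nonempty c-approximation to facility location, i.e. fl(X,S) ≤ c·fl(X,F') for every nonempty F' ⊆ Y. For each x ∈ X fix a nearest point π_S(x) ∈ S to x and an ε·d(x,S)-net N_x of B(π_S(x), d(x,S)/ε) ∩ Y, and set d̂_S(x,F) := min_{f∈F} min_{u∈N_x} ( d(x,u) + d(u,f) ). Then for every nonempty F ⊆ Y: Σ_{x∈X} d̂_S(x,F) + Σ_{f∈F} ocost(f) ≤ (1+6cε)·fl(X,F).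 -/
/-!
Fix a client `x`, write `D = d(x,S)`, `s` for its nearest point in `S`, and let `f ∈ F` be nearest
to `x`, at distance `a`. If `f` lies in the ball `B(s, D/ε)`, routing through a net point near `f`
costs at most `a + 2εD`. If `f` is outside the ball, then `a ≥ D/ε - D`, so `D ≤ 2εa`, and routing
through a net point near `s` costs at most `a + 2D + 2εD ≤ (1 + 4ε)a + 2εD`. Thus
`surrogate_le` gives `(1 + 4ε) d(x,F) + 2ε d(x,S)` for each client. Summing over clients, the total
distance to `S` is at most `fl(X,S) ≤ c · fl(X,F)`, and `4ε + 2cε ≤ 6cε` because `c ≥ 1`.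
-/

/-- The facility location cost of a facility set `F` for clients `X`:
`fl(X,F) = Σ_{x∈X} d(x,F) + Σ_{f∈F} ocost(f)`. -/
noncomputable def flCost {M : Type*} [MetricSpace M]
    (X : Finset M) (ocost : M → ℝ) (F : Finset M) : ℝ :=
  (∑ x ∈ X, Metric.infDist x (F : Set M)) + ∑ f ∈ F, ocost f

/-- Bound on the surrogate distance of a single client `x`, for a set `N` that covers the points of
`Y` in the ball of radius `d(x,s)/ε` around an arbitrary `s ∈ Y`, within distance `ε·d(x,s)`. -/
theorem surrogate_le {M : Type*} [MetricSpace M] (Y F : Finset M) (x s : M) (hsY : s ∈ Y)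
    (ε : ℝ) (hε : ε ∈ Set.Ioo (0 : ℝ) (1/2)) (N : Set M)
    (hcover : ∀ p ∈ Metric.closedBall s (dist x s / ε) ∩ (Y : Set M),
      ∃ u ∈ N, dist p u ≤ ε * dist x s)
    (hFY : F ⊆ Y) (hF : F.Nonempty) :
    sInf {r : ℝ | ∃ u ∈ N, ∃ f ∈ F, r = dist x u + dist u f} ≤
      (1 + 4 * ε) * Metric.infDist x (F : Set M) + 2 * ε * dist x s := by
  obtain ⟨hε0, hε1⟩ := hε
  obtain ⟨f, hfF, hf⟩ := F.finite_toSet.isCompact.exists_infDist_eq_dist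
    (Finset.coe_nonempty.mpr hF) x
  rw [hf]
  have hfF' : f ∈ F := hfF
  have key : ∀ u ∈ N, sInf {r : ℝ | ∃ u ∈ N, ∃ f ∈ F, r = dist x u + dist u f} ≤
      dist x u + dist u f := fun u hu =>
    csInf_le ⟨0, by rintro r ⟨u, -, f, -, rfl⟩; positivity⟩ ⟨u, hu, f, hfF', rfl⟩
  have ha : 0 ≤ ε * dist x f := by positivity
  by_cases hb : dist f s ≤ dist x s / ε
  · obtain ⟨u, hu, hfu⟩ := hcover f ⟨hb, hFY hfF'⟩
    have h1 := dist_triangle x f u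
    have h2 := dist_comm u f
    linarith [key u hu]
  · have hs : s ∈ Metric.closedBall s (dist x s / ε) ∩ (Y : Set M) :=
      ⟨Metric.mem_closedBall_self (by positivity), hsY⟩
    obtain ⟨u, hu, hsu⟩ := hcover s hs
    have h1 := dist_triangle x s u
    have h2 := dist_triangle u s f
    have h3 := dist_triangle s x f
    rw [dist_comm u s] at h2
    rw [dist_comm s x] at h3
    have hlt : dist x s < dist s f * ε := by
      rw [not_le, div_lt_iff₀ hε0, dist_comm f s] at hb
      exact hb
    -- `D < ε (D + a)` together with `ε < 1/2` gives `D ≤ 2εa`.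
    have hD : dist x s ≤ 2 * (ε * dist x f) := by
      nlinarith [mul_le_mul_of_nonneg_right h3 hε0.le, dist_nonneg (x := x) (y := s)]
    linarith [key u hu]

/-- If `S` is a `c`-approximation for facility location and each client
`x` is represented by an `ε·d(x,S)`-net `N x` of `B(π_S(x), d(x,S)/ε) ∩ Y`, then the
surrogate cost `Σ_x d̂_S(x,F) + Σ_{f∈F} ocost(f)` is at most `(1+6cε)·fl(X,F)`
for every nonempty `F ⊆ Y`. -/
theorem stmt2 {M : Type*} [MetricSpace M]
    (X Y S F : Finset M) (hX : X.Nonempty) (hY : Y.Nonempty)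
    (hSY : S ⊆ Y) (hS : S.Nonempty)
    (ocost : M → ℝ) (hocost : ∀ f ∈ Y, 0 ≤ ocost f)
    (ε c : ℝ) (hε : ε ∈ Set.Ioo (0 : ℝ) (1/2)) (hc : 1 ≤ c)
    (happrox : ∀ F' : Finset M, F' ⊆ Y → F'.Nonempty →
      flCost X ocost S ≤ c * flCost X ocost F')
    (πS : M → M)
    (hπS : ∀ x ∈ X, πS x ∈ S ∧ ∀ s ∈ S, dist x (πS x) ≤ dist x s)
    (N : M → Set M)
    (hNsub : ∀ x ∈ X,
      N x ⊆ Metric.closedBall (πS x) (dist x (πS x) / ε) ∩ (Y : Set M))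
    (hNpack : ∀ x ∈ X, ∀ u ∈ N x, ∀ v ∈ N x, u ≠ v →
      ε * dist x (πS x) ≤ dist u v)
    (hNcover : ∀ x ∈ X,
      ∀ p ∈ Metric.closedBall (πS x) (dist x (πS x) / ε) ∩ (Y : Set M),
        ∃ u ∈ N x, dist p u ≤ ε * dist x (πS x))
    (hFY : F ⊆ Y) (hF : F.Nonempty) :
    (∑ x ∈ X, sInf {r : ℝ | ∃ u ∈ N x, ∃ f ∈ F, r = dist x u + dist u f}) +
      (∑ f ∈ F, ocost f) ≤ (1 + 6 * c * ε) * flCost X ocost F := by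
  obtain ⟨hε0, hε1⟩ := id hε
  have hpt := Finset.sum_le_sum fun x hx =>
    surrogate_le Y F x (πS x) (hSY (hπS x hx).1) ε hε (N x) (hNcover x hx) hFY hF
  rw [Finset.sum_add_distrib, ← Finset.mul_sum, ← Finset.mul_sum] at hpt
  have hS' : ∑ x ∈ X, dist x (πS x) ≤ flCost X ocost S := by
    have h1 : ∑ x ∈ X, dist x (πS x) ≤ ∑ x ∈ X, Metric.infDist x (S : Set M) :=
      Finset.sum_le_sum fun x hx =>
        (Metric.le_infDist (Finset.coe_nonempty.mpr hS)).mpr fun y hy => (hπS x hx).2 y hy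
    have h2 : 0 ≤ ∑ f ∈ S, ocost f := Finset.sum_nonneg fun f hf => hocost f (hSY hf)
    unfold flCost
    linarith
  have hSF := hS'.trans (happrox F hFY hF)
  have ho : 0 ≤ ∑ f ∈ F, ocost f := Finset.sum_nonneg fun f hf => hocost f (hFY hf)
  have hA : 0 ≤ ∑ x ∈ X, Metric.infDist x (F : Set M) :=
    Finset.sum_nonneg fun x _ => Metric.infDist_nonneg
  unfold flCost at hSF ⊢
  set A := ∑ x ∈ X, Metric.infDist x (F : Set M)
  set O := ∑ f ∈ F, ocost f
  have h1 := mul_le_mul_of_nonneg_left hSF hε0.le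
  have h2 : 0 ≤ (c - 1) * (ε * (A + O)) :=
    mul_nonneg (by linarith) (by positivity)
  have h3 : 0 ≤ ε * O := by positivity
  linarith
end

section
/- Let (M,d) be a metric space, ρ ∈ (0,1], ℓ ≥ 1 and 0 ≤ j ≤ ℓ integers. Let p_0,p_1,…,p_ℓ be points of M with d(p_i,p_{i+1}) ≤ ρ·2^{i+1} for all 0 ≤ i < ℓ, and let q_j,q_{j+1},…,q_ℓ be points of M with d(q_j,q_{j+1}) ≤ 2·√ρ·2^{j+1} (when j < ℓ) and d(q_i,q_{i+1}) ≤ ρ·2^{i+1} for all j < i < ℓ. Let L := d(p_ℓ,q_ℓ) + Σ_{i=0}^{ℓ-1} d(p_i,p_{i+1}) + Σ_{i=j}^{ℓ-1} d(q_i,q_{i+1}). Then d(p_0,q_j) ≤ L; moreover L ≤ d(p_0,q_j) + 16·√ρ·2^ℓ if j < ℓ, and L ≤ d(p_0,q_j) + 8·ρ·2^ℓ if j = ℓ. -/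
/-!
Write `P` and `Q` for the lengths of the two portal chains and `L = d(p_ℓ, q_ℓ) + P + Q`. The triangle
inequality along the path gives `d(p_0, q_j) ≤ L`, and applied to `d(p_ℓ, q_ℓ)` it gives
`L ≤ d(p_0, q_j) + 2P + 2Q`. Geometric summation (`sum_Ico_le_geom`) yields `P ≤ ρ·2^{ℓ+1}`. If `j = ℓ`
then `Q = 0`. If `j < ℓ`, then since `ρ ≤ √ρ` the exceptional first step costs at most
`√ρ·2^{j+2}` and the remaining ones at most `√ρ·(2^{ℓ+1} - 2^{j+2})`, so `Q ≤ √ρ·2^{ℓ+1}`. Hence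
`2P + 2Q` is at most `4ρ·2^ℓ`, respectively `8√ρ·2^ℓ`.
-/

lemma sum_Ico_le_geom (f : ℕ → ℝ) (c : ℝ) (a b : ℕ) (hab : a ≤ b)
    (hf : ∀ i, a ≤ i → i < b → f i ≤ c * 2 ^ (i + 1)) :
    ∑ i ∈ Finset.Ico a b, f i ≤ c * (2 ^ (b + 1) - 2 ^ (a + 1)) := by
  induction b, hab using Nat.le_induction with
  | base => simp
  | succ n hn ih =>
    rw [Finset.sum_Ico_succ_top hn]
    have h1 := ih fun i hi hin => hf i hi (by omega)
    have h2 := hf n hn (by omega)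
    have h3 : c * ((2 : ℝ) ^ (n + 1 + 1) - 2 ^ (a + 1)) =
        c * (2 ^ (n + 1) - 2 ^ (a + 1)) + c * 2 ^ (n + 1) := by ring
    linarith


/-- Portal-respecting distance bound for the modified decomposition
with an ornament attached at level `j`.  The first `q`-step is bounded by
`2√ρ·2^{j+1}` and all other consecutive portal steps by `ρ·2^{i+1}`. -/
theorem stmt4 {M : Type*} [MetricSpace M] (ρ : ℝ) (hρ : ρ ∈ Set.Ioc (0 : ℝ) 1)
    (ℓ j : ℕ) (hℓ : 1 ≤ ℓ) (hj : j ≤ ℓ) (p q : ℕ → M)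
    (hp : ∀ i < ℓ, dist (p i) (p (i + 1)) ≤ ρ * 2 ^ (i + 1))
    (hqj : j < ℓ → dist (q j) (q (j + 1)) ≤ 2 * Real.sqrt ρ * 2 ^ (j + 1))
    (hq : ∀ i, j < i → i < ℓ → dist (q i) (q (i + 1)) ≤ ρ * 2 ^ (i + 1)) :
    dist (p 0) (q j) ≤
      dist (p ℓ) (q ℓ) + (∑ i ∈ Finset.range ℓ, dist (p i) (p (i + 1))) +
        (∑ i ∈ Finset.Ico j ℓ, dist (q i) (q (i + 1))) ∧
    (j < ℓ →
      dist (p ℓ) (q ℓ) + (∑ i ∈ Finset.range ℓ, dist (p i) (p (i + 1))) +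
          (∑ i ∈ Finset.Ico j ℓ, dist (q i) (q (i + 1))) ≤
        dist (p 0) (q j) + 16 * Real.sqrt ρ * 2 ^ ℓ) ∧
    (j = ℓ →
      dist (p ℓ) (q ℓ) + (∑ i ∈ Finset.range ℓ, dist (p i) (p (i + 1))) +
          (∑ i ∈ Finset.Ico j ℓ, dist (q i) (q (i + 1))) ≤
        dist (p 0) (q j) + 8 * ρ * 2 ^ ℓ) := by
  obtain ⟨h0, h1⟩ := hρ
  have hs : ρ ≤ √ρ := Real.le_sqrt_of_sq_le (by nlinarith)
  have hP := sum_Ico_le_geom (fun i => dist (p i) (p (i + 1))) ρ 0 ℓ (Nat.zero_le _)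
    fun i _ hi => hp i hi
  rw [← Finset.range_eq_Ico] at hP
  have hPd := dist_le_range_sum_dist p ℓ
  have hQd := dist_le_Ico_sum_dist q hj
  have hQ : j < ℓ → ∑ i ∈ Finset.Ico j ℓ, dist (q i) (q (i + 1)) ≤ √ρ * 2 ^ (ℓ + 1) := by
    intro hjl
    rw [Finset.sum_eq_sum_Ico_succ_bot hjl]
    have hr := sum_Ico_le_geom (fun i => dist (q i) (q (i + 1))) √ρ (j + 1) ℓ hjl
      fun i hi hil => (hq i hi hil).trans (by gcongr)
    have hb := hqj hjl
    have he : √ρ * ((2 : ℝ) ^ (ℓ + 1) - 2 ^ (j + 1 + 1)) =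
        √ρ * 2 ^ (ℓ + 1) - 2 * √ρ * 2 ^ (j + 1) := by ring
    linarith
  set P := ∑ i ∈ Finset.range ℓ, dist (p i) (p (i + 1))
  set Q := ∑ i ∈ Finset.Ico j ℓ, dist (q i) (q (i + 1)) with hQdef
  have hpow : (0 : ℝ) < 2 ^ ℓ := by positivity
  have hP2 : P ≤ 2 * (ρ * 2 ^ ℓ) := by
    rw [pow_succ] at hP
    norm_num at hP
    nlinarith
  have t1 := dist_triangle4 (p 0) (p ℓ) (q ℓ) (q j)
  have t2 := dist_triangle4 (p ℓ) (p 0) (q j) (q ℓ)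
  rw [dist_comm (q ℓ) (q j)] at t1
  rw [dist_comm (p ℓ) (p 0)] at t2
  have hρp : 0 < ρ * 2 ^ ℓ := by positivity
  have hsp : ρ * 2 ^ ℓ ≤ √ρ * 2 ^ ℓ := by gcongr
  refine ⟨by linarith, fun hjl => ?_, fun hjl => ?_⟩
  · have hQ2 := hQ hjl
    rw [pow_succ] at hQ2
    linarith
  · have hQ0 : Q = 0 := by simp [hQdef, hjl]
    linarith
end

section
/- Let (M,d) be a metric space and X ⊆ M a nonempty subset. Let bar : M → X be a map such that bar(x) = x for every x ∈ X and d(y, bar(y)) ≤ 2·d(y,X) for every y ∈ M (i.e. bar(y) is a 2-approximate nearest neighbor of y in X). Define d'(p,q) := |d(p, bar(p)) − d(q, bar(q))| + d(bar(p), bar(q)) for p,q ∈ M. Then: (1) for all x,y ∈ X, d'(x,y) = d(x,y); and (2) for all x ∈ X and y ∈ M, d(x,y) ≤ d'(x,y) ≤ 6·d(x,y). -/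
/-- The metric embedding `d'(p,q) = |d(p,bar p) − d(q,bar q)| + d(bar p, bar q)`
built from a 2-approximate nearest neighbor map `bar : M → X` with `bar x = x` on `X`,
agrees with `d` on `X` and distorts client-facility distances by at most a factor `6`. -/
theorem stmt5 {M : Type*} [MetricSpace M] (X : Set M) (hX : X.Nonempty)
    (bar : M → M) (hbarX : ∀ y : M, bar y ∈ X)
    (hbar_id : ∀ x ∈ X, bar x = x)
    (hbar_ann : ∀ y : M, dist y (bar y) ≤ 2 * Metric.infDist y X) :
    (∀ x ∈ X, ∀ y ∈ X,
      |dist x (bar x) - dist y (bar y)| + dist (bar x) (bar y) = dist x y) ∧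
    (∀ x ∈ X, ∀ y : M,
      dist x y ≤ |dist x (bar x) - dist y (bar y)| + dist (bar x) (bar y) ∧
      |dist x (bar x) - dist y (bar y)| + dist (bar x) (bar y) ≤ 6 * dist x y) := by
  refine ⟨fun x hx y hy => by simp [hbar_id x hx, hbar_id y hy], fun x hx y => ?_⟩
  -- For `x ∈ X` the embedded distance is `dist y (bar y) + dist x (bar y)`.
  rw [hbar_id x hx, dist_self, zero_sub, abs_neg, abs_of_nonneg dist_nonneg]
  have h1 : Metric.infDist y X ≤ dist y x := Metric.infDist_le_dist_of_mem hx
  have h2 := hbar_ann y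
  have h3 := dist_triangle x y (bar y)
  have h4 := dist_triangle_right x y (bar y)
  have h5 := dist_comm x y
  have h6 : 0 ≤ dist x y := dist_nonneg
  -- `dist y (bar y) ≤ 2 * dist x y` and `dist x (bar y) ≤ 3 * dist x y`, so even `5` suffices.
  constructor <;> linarith
end

section
/- Let s ≥ 1 be an integer, t > 0 and D ≥ 0 reals, and let m_1,…,m_s and M_1,…,M_s be reals with m_j ≤ M_j and M_j − m_j ≤ D for every j. Let α be a real random variable uniformly distributed on the interval [1/2, 1] and let σ be a uniformly random permutation of {1,…,s}, with α and σ independent. Then the probability that there exists j ∈ {1,…,s} with m_j ≤ α·t < M_j and σ(j) < σ(i) for all i < j is at most (2D/t)·Σ_{j=1}^{s} 1/j. -/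
/-!
A union bound over `j`. By independence the `j`-th event has probability
`P(m j ≤ α t < M j) * P(σ j < σ i for all i < j)`. The first factor is at most `2 * D / t`,
since `α` has density at most `2` and must lie in an interval of length at most `D / t`
(`measure_interval_le`). The second is at most `1 / (j + 1)` with `j` counted from zero, since
the minimum of `σ` over the first `j + 1` positions is equally likely to be at each of them
(`card_min_mul_le`, `measure_min_le`).
-/

open MeasureTheory
open scoped ENNReal

instance permMeasurableSpace (s : ℕ) : MeasurableSpace (Equiv.Perm (Fin s)) := ⊤

/-- Swapping position `j` with a position `k ≤ j` moves the strict minimum over the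
initial segment `{i | i ≤ j}` from position `j` to position `k`. -/
lemma swap_moves_min {s : ℕ} {j k i : Fin s} {σ : Equiv.Perm (Fin s)}
    (hσ : ∀ i, i < j → σ j < σ i) (hk : k ≤ j) (hi : i ≤ j) (hik : i ≠ k) :
    (σ * Equiv.swap j k) k < (σ * Equiv.swap j k) i := by
  simp only [Equiv.Perm.mul_apply, Equiv.swap_apply_right]
  apply hσ
  by_cases hij : i = j
  · subst hij
    rw [Equiv.swap_apply_left]
    exact lt_of_le_of_ne hk hik.symm
  · rw [Equiv.swap_apply_of_ne_of_ne hij hik]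
    exact lt_of_le_of_ne hi hij

/-- The permutations whose minimum over `{i | i ≤ j}` is at `j` make up at most a
`1 / (j + 1)` fraction: `(σ, k) ↦ σ * swap j k` with `k ≤ j` is injective, as `k` can be
read off from the image as the position of its minimum. -/
lemma card_min_mul_le {s : ℕ} (j : Fin s) :
    Nat.card {σ : Equiv.Perm (Fin s) | ∀ i, i < j → σ j < σ i} * ((j : ℕ) + 1)
      ≤ Nat.card (Equiv.Perm (Fin s)) := by
  have hc : Nat.card (Set.Iic j) = (j : ℕ) + 1 := by
    simp
  rw [← hc, ← Nat.card_prod]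
  refine Nat.card_le_card_of_injective
    (fun p : {σ : Equiv.Perm (Fin s) | ∀ i, i < j → σ j < σ i} × Set.Iic j =>
      (p.1 : Equiv.Perm (Fin s)) * Equiv.swap j p.2) ?_
  rintro ⟨⟨σ, hσ⟩, ⟨k, hk⟩⟩ ⟨⟨σ', hσ'⟩, ⟨k', hk'⟩⟩ h
  simp only [Set.mem_ofPred_eq, Set.mem_Iic] at hσ hσ' hk hk' h
  have hkk : k = k' := by
    by_contra hne
    have h1 := swap_moves_min hσ hk hk' (Ne.symm hne)
    have h2 := swap_moves_min hσ' hk' hk hne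
    rw [← h] at h2
    exact lt_asymm h1 h2
  subst hkk
  have := mul_right_cancel h
  subst this
  rfl

lemma measure_min_le {s : ℕ} (j : Fin s) :
    (PMF.uniformOfFintype (Equiv.Perm (Fin s))).toMeasure
      {σ : Equiv.Perm (Fin s) | ∀ i, i < j → σ j < σ i}
      ≤ ENNReal.ofReal (1 / ((j : ℝ) + 1)) := by
  classical
  rw [PMF.toMeasure_uniformOfFintype_apply _ MeasurableSpace.measurableSet_top]
  have h := card_min_mul_le j
  rw [Nat.card_eq_fintype_card, Nat.card_eq_fintype_card] at h
  have hpos : (0 : ℝ) < Fintype.card (Equiv.Perm (Fin s)) := by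
    exact_mod_cast Fintype.card_pos
  rw [← ENNReal.ofReal_natCast, ← ENNReal.ofReal_natCast, ← ENNReal.ofReal_div_of_pos hpos]
  apply ENNReal.ofReal_le_ofReal
  rw [div_le_div_iff₀ hpos (by positivity), one_mul]
  exact_mod_cast h

lemma measure_interval_le {t D a b : ℝ} (ht : 0 < t) (hab : b - a ≤ D) :
    ((2 : ℝ≥0∞) • (volume.restrict (Set.Icc (1/2 : ℝ) 1))) {x | a ≤ x * t ∧ x * t < b}
      ≤ ENNReal.ofReal (2 * D / t) := by
  have hset : {x : ℝ | a ≤ x * t ∧ x * t < b} = Set.Ico (a / t) (b / t) := by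
    ext x
    simp [div_le_iff₀ ht, lt_div_iff₀ ht]
  rw [hset, Measure.smul_apply, smul_eq_mul]
  calc (2 : ℝ≥0∞) * volume.restrict (Set.Icc (1/2 : ℝ) 1) (Set.Ico (a / t) (b / t))
      ≤ 2 * volume (Set.Ico (a / t) (b / t)) := by
        gcongr
        exact Measure.restrict_le_self
    _ = ENNReal.ofReal (2 * (b / t - a / t)) := by
        rw [Real.volume_Ico, ENNReal.ofReal_mul (by norm_num), ENNReal.ofReal_ofNat]
    _ ≤ ENNReal.ofReal (2 * D / t) := by
        apply ENNReal.ofReal_le_ofReal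
        rw [← sub_div, mul_div_assoc]
        gcongr

/-- probabilistic core of the improved cutting-probability bound.
With `α` uniform on `[1/2,1]` (the measure `2 • volume.restrict (Icc (1/2) 1)`)
and `σ` a uniformly random permutation of `Fin s`, independent of `α`, the
probability that some `j` satisfies `m_j ≤ α·t < M_j` and `σ(j) < σ(i)` for all
`i < j` is at most `(2D/t)·Σ_{j=1}^{s} 1/j`. -/
theorem stmt6 (s : ℕ) (hs : 1 ≤ s) (t D : ℝ) (ht : 0 < t) (hD : 0 ≤ D)
    (m M : Fin s → ℝ) (hmM : ∀ j, m j ≤ M j) (hdiam : ∀ j, M j - m j ≤ D) :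
    (((2 : ℝ≥0∞) • (volume.restrict (Set.Icc (1/2 : ℝ) 1))).prod
        ((PMF.uniformOfFintype (Equiv.Perm (Fin s))).toMeasure))
      {p : ℝ × Equiv.Perm (Fin s) |
        ∃ j : Fin s, m j ≤ p.1 * t ∧ p.1 * t < M j ∧
          ∀ i : Fin s, i < j → p.2 j < p.2 i}
      ≤ ENNReal.ofReal ((2 * D / t) * ∑ j ∈ Finset.range s, (1 : ℝ) / (j + 1)) := by
  set μ : Measure ℝ := (2 : ℝ≥0∞) • (volume.restrict (Set.Icc (1/2 : ℝ) 1)) with hμ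
  set ν := (PMF.uniformOfFintype (Equiv.Perm (Fin s))).toMeasure with hν
  have hsub : {p : ℝ × Equiv.Perm (Fin s) |
      ∃ j : Fin s, m j ≤ p.1 * t ∧ p.1 * t < M j ∧ ∀ i : Fin s, i < j → p.2 j < p.2 i}
      ⊆ ⋃ j : Fin s, {x : ℝ | m j ≤ x * t ∧ x * t < M j} ×ˢ
        {σ : Equiv.Perm (Fin s) | ∀ i, i < j → σ j < σ i} := by
    rintro ⟨x, σ⟩ ⟨j, h1, h2, h3⟩
    exact Set.mem_iUnion.2 ⟨j, ⟨h1, h2⟩, h3⟩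
  have hc : 0 ≤ 2 * D / t := by positivity
  refine (measure_mono hsub).trans ((measure_iUnion_fintype_le _ _).trans ?_)
  rw [Finset.sum_range, Finset.mul_sum,
    ENNReal.ofReal_sum_of_nonneg (fun j _ => by positivity)]
  refine Finset.sum_le_sum fun j _ => ?_
  rw [Measure.prod_prod, ENNReal.ofReal_mul hc]
  exact mul_le_mul' (measure_interval_le ht (hdiam j)) (measure_min_le j)
end

section
/- Let (M,d) be a metric space, and let F*, S ⊆ M be finite nonempty subsets. For each f ∈ F* fix a nearest point π_S(f) ∈ S to f. Suppose G ⊆ F* is a nonempty subset such that for every f ∈ F* there exists g ∈ G with d(g, π_S(f)) ≤ d(f, π_S(f)). Then for every x ∈ M: d(x,G) ≤ 3·d(x,F*) + 2·d(x,S). -/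
/-- first center-swapping inequality.
If for every `f ∈ F*` some `g ∈ G` satisfies `d(g, π_S(f)) ≤ d(f, π_S(f))`,
then `d(x,G) ≤ 3·d(x,F*) + 2·d(x,S)` for every `x`. -/
theorem stmt7 {M : Type*} [MetricSpace M] (Fstar S : Finset M)
    (hFstar : Fstar.Nonempty) (hS : S.Nonempty)
    (πS : M → M)
    (hπS : ∀ f ∈ Fstar, πS f ∈ S ∧ ∀ s ∈ S, dist f (πS f) ≤ dist f s)
    (G : Finset M) (hGF : G ⊆ Fstar) (hG : G.Nonempty)
    (hGgood : ∀ f ∈ Fstar, ∃ g ∈ G, dist g (πS f) ≤ dist f (πS f))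
    (x : M) :
    Metric.infDist x (G : Set M) ≤
      3 * Metric.infDist x (Fstar : Set M) + 2 * Metric.infDist x (S : Set M) := by
  -- `f` and `s` are the points of `F*` and `S` nearest to `x`; the path from `x` to `G` is
  -- `x → f → π_S(f) → g`, with both later legs at most `d(f, s) ≤ d(x, f) + d(x, s)`.
  obtain ⟨f, hf, hxf⟩ := Fstar.finite_toSet.isCompact.exists_infDist_eq_dist hFstar x
  obtain ⟨s, hs, hxs⟩ := S.finite_toSet.isCompact.exists_infDist_eq_dist hS x
  obtain ⟨g, hg, hgf⟩ := hGgood f hf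
  have hfs := (hπS f hf).2 s hs
  have hxG : Metric.infDist x (G : Set M) ≤ dist x g := Metric.infDist_le_dist_of_mem hg
  have hxπ := dist_triangle x f (πS f)
  have hxg := dist_triangle_right x g (πS f)
  have hfxs := dist_triangle_left f s x
  rw [hxf, hxs]
  linarith
end

section
/- Let (M,d) be a metric space, and let G, S, F ⊆ M be nonempty subsets with G and S finite. For each g ∈ G fix a nearest point π_S(g) ∈ S to g. Suppose that for every g ∈ G, either g ∈ F or π_S(g) ∈ F. Then for every x ∈ M: d(x,F) ≤ 2·d(x,G) + d(x,S). -/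
/-- second center-swapping inequality.
If every `g ∈ G` is either in `F` or has its nearest point of `S` in `F`, then
`d(x,F) ≤ 2·d(x,G) + d(x,S)` for every `x`. -/
theorem stmt8 {M : Type*} [MetricSpace M] (G S : Finset M) (F : Set M)
    (hG : G.Nonempty) (hS : S.Nonempty) (hF : F.Nonempty)
    (πS : M → M)
    (hπS : ∀ g ∈ G, πS g ∈ S ∧ ∀ s ∈ S, dist g (πS g) ≤ dist g s)
    (hswap : ∀ g ∈ G, (g : M) ∈ F ∨ πS g ∈ F)
    (x : M) :
    Metric.infDist x F ≤
      2 * Metric.infDist x (G : Set M) + Metric.infDist x (S : Set M) := by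
  obtain ⟨g, hg, hxg⟩ := G.finite_toSet.isCompact.exists_infDist_eq_dist hG x
  obtain ⟨s, hs, hxs⟩ := S.finite_toSet.isCompact.exists_infDist_eq_dist hS x
  rw [hxg, hxs]
  rcases hswap g hg with h | h
  · have h1 := Metric.infDist_le_dist_of_mem (x := x) h
    linarith [dist_nonneg (x := x) (y := g), dist_nonneg (x := x) (y := s)]
  · have h1 := Metric.infDist_le_dist_of_mem (x := x) h
    -- d(x, π g) ≤ d(x, g) + d(g, π g) ≤ d(x, g) + d(g, s) ≤ 2 d(x, g) + d(x, s)
    have h2 := (hπS g hg).2 s hs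
    have h3 := dist_triangle x g (πS g)
    have h4 := dist_triangle_left g s x
    linarith
end

section
/- Let (M,d) be a metric space, and let F*, S ⊆ M be finite nonempty subsets. For each f ∈ F* fix a nearest point π_S(f) ∈ S to f. For s ∈ S with nonempty preimage S^{-1}(s) := {f ∈ F* : π_S(f) = s}, let f_s ∈ S^{-1}(s) be a point minimizing d(f,s) over f ∈ S^{-1}(s), and let F_S := {f_s : s ∈ S, S^{-1}(s) ≠ ∅}. Let F̄ be any set with F_S ⊆ F̄ ⊆ F*, let B ⊆ S be arbitrary, and define F := (F̄ \ {f_s : s ∈ B, S^{-1}(s) ≠ ∅}) ∪ B. Then F is nonempty and for every x ∈ M: d(x,F) ≤ 6·d(x,F*) + 5·d(x,S). -/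
/-! Write `a = d(x, F*)`, `b = d(x, S)`, let `f ∈ F*` be nearest to `x` and `s = πS f`. Since `s` is
nearest to `f` in `S`, `d(f, s) ≤ a + b`. If `s ∈ B`, then `s` itself lies in `F`. Otherwise
`f_s ∈ F`: equality `f_s = f_t` with `t ∈ B` would give `s = πS f_s = πS f_t = t ∈ B`. In either case
some `g ∈ F` has `d(f, g) ≤ 2 d(f, s)`, because `d(f_s, s) ≤ d(f, s)`. Hence
`d(x, F) ≤ a + 2 (a + b) = 3 a + 2 b`, which is stronger than the required bound. -/

/-- deterministic distance guarantee of the good-solution construction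
for k-median.  From the optimal centers `F*`, the approximate centers `S`, the
per-`s` closest preimages `f_s`, any `F̄` with `F_S ⊆ F̄ ⊆ F*` and any `B ⊆ S`,
the set `F := (F̄ \ {f_s : s ∈ B}) ∪ B` is nonempty and satisfies
`d(x,F) ≤ 6·d(x,F*) + 5·d(x,S)` for every `x`. -/
theorem stmt9 {M : Type*} [MetricSpace M] (Fstar S : Set M)
    (hFfin : Fstar.Finite) (hSfin : S.Finite)
    (hFstar : Fstar.Nonempty) (hS : S.Nonempty)
    (πS : M → M)
    (hπS : ∀ f ∈ Fstar, πS f ∈ S ∧ ∀ s ∈ S, dist f (πS f) ≤ dist f s)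
    (fs : M → M)
    (hfs : ∀ s ∈ S, (∃ f ∈ Fstar, πS f = s) →
      fs s ∈ Fstar ∧ πS (fs s) = s ∧
        ∀ f ∈ Fstar, πS f = s → dist (fs s) s ≤ dist f s)
    (Fbar : Set M)
    (hFS : {f | ∃ s ∈ S, (∃ f' ∈ Fstar, πS f' = s) ∧ f = fs s} ⊆ Fbar)
    (hFbar : Fbar ⊆ Fstar)
    (B : Set M) (hB : B ⊆ S) :
    ((Fbar \ {f | ∃ s ∈ B, (∃ f' ∈ Fstar, πS f' = s) ∧ f = fs s}) ∪ B).Nonempty ∧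
    ∀ x : M,
      Metric.infDist x
          ((Fbar \ {f | ∃ s ∈ B, (∃ f' ∈ Fstar, πS f' = s) ∧ f = fs s}) ∪ B) ≤
        6 * Metric.infDist x Fstar + 5 * Metric.infDist x S := by
  have key : ∀ f ∈ Fstar, ∃ g ∈
      (Fbar \ {f | ∃ s ∈ B, (∃ f' ∈ Fstar, πS f' = s) ∧ f = fs s}) ∪ B,
      dist f g ≤ 2 * dist f (πS f) := by
    intro f hf
    have hs := (hπS f hf).1
    by_cases hsB : πS f ∈ B
    · exact ⟨πS f, Or.inr hsB, by linarith [dist_nonneg (x := f) (y := πS f)]⟩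
    · obtain ⟨-, hπ, hmin⟩ := hfs (πS f) hs ⟨f, hf, rfl⟩
      refine ⟨fs (πS f), Or.inl ⟨hFS ⟨πS f, hs, ⟨f, hf, rfl⟩, rfl⟩, ?_⟩, ?_⟩
      · rintro ⟨t, htB, ht, heq⟩
        have hπt := (hfs t (hB htB) ht).2.1
        rw [← heq, hπ] at hπt
        exact hsB (hπt ▸ htB)
      · linarith [dist_triangle_right f (fs (πS f)) (πS f), hmin f hf rfl]
  refine ⟨?_, fun x => ?_⟩
  · obtain ⟨f, hf⟩ := hFstar
    obtain ⟨g, hg, -⟩ := key f hf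
    exact ⟨g, hg⟩
  · obtain ⟨f, hf, hxf⟩ := hFfin.isCompact.exists_infDist_eq_dist hFstar x
    obtain ⟨s, hs, hxs⟩ := hSfin.isCompact.exists_infDist_eq_dist hS x
    obtain ⟨g, hg, hfg⟩ := key f hf
    have hxg := Metric.infDist_le_dist_of_mem (x := x) hg
    rw [hxf, hxs]
    linarith [dist_triangle x f g, (hπS f hf).2 s hs, dist_triangle_left f s x,
      dist_nonneg (x := x) (y := f), dist_nonneg (x := x) (y := s)]
end

section
/- Let z, ℓ ≥ 1 be integers, ε ∈ (0,1), and x ∈ ℝ^z a time series. Suppose x̃ ∈ ℝ^ℓ is a minimum-error ℓ-simplification of x, i.e. d_dF(x,x̃) ≤ d_dF(x,y) for all y ∈ ℝ^ℓ. Then there exists x' ∈ ℝ^z whose set of entry values set(x') = {x'_1,…,x'_z} has at most ℓ·(⌈2/ε⌉ + 2) elements, such that for every y ∈ ℝ^ℓ: (1−ε)·d_dF(x,y) ≤ d_dF(x',y) ≤ (1+ε)·d_dF(x,y). -/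
/-!
Let `D = dFrechet z ℓ x xt`. A traversal visits every index `i ∈ [1, z]`, so every `x i` lies within
`D` of some `xt j` (`exists_close`). Snapping `x i` to the grid of mesh `ε * D` that starts at
`xt j - D` moves it by at most `ε * D`, and at most `⌈2 / ε⌉₊ + 1` grid points are needed for each
`j` (`exists_grid`). Moving the entries of a curve by at most `δ` changes its distance to any other
curve by at most `δ` (`dFrechet_le_add`). By minimality of `xt`, `ε * D` is at most
`ε * dFrechet z ℓ x y` for every `y`, which makes the additive error a relative one.
-/

/-- A traversal between lengths `z` and `ℓ` (1-based indices). -/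
def IsTraversal (z ℓ : ℕ) (T : List (ℕ × ℕ)) : Prop :=
  T.head? = some (1, 1) ∧ T.getLast? = some (z, ℓ) ∧
  T.Chain' (fun p q =>
    (q.1 = p.1 ∨ q.1 = p.1 + 1) ∧ (q.2 = p.2 ∨ q.2 = p.2 + 1) ∧
    (q.1 = p.1 + 1 ∨ q.2 = p.2 + 1))

/-- Discrete Fréchet distance between curves of complexities `z` and `ℓ`. -/
noncomputable def dFrechet {E : Type*} [PseudoMetricSpace E] (z ℓ : ℕ)
    (p q : ℕ → E) : ℝ :=
  sInf {r : ℝ | ∃ T : List (ℕ × ℕ), IsTraversal z ℓ T ∧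
    r = (T.map (fun ij => dist (p ij.1) (q ij.2))).foldr max 0}

lemma exists_isTraversal (z ℓ : ℕ) (hz : 1 ≤ z) (hℓ : 1 ≤ ℓ) : ∃ T, IsTraversal z ℓ T := by
  induction ℓ, hℓ using Nat.le_induction with
  | base =>
    induction z, hz using Nat.le_induction with
    | base => exact ⟨[(1, 1)], rfl, rfl, List.isChain_singleton _⟩
    | succ n hn ih =>
      obtain ⟨T, h1, h2, h3⟩ := ih
      refine ⟨T ++ [(n + 1, 1)], by simp [h1], by simp, ?_⟩
      refine List.isChain_append.2 ⟨h3, by simp, ?_⟩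
      simp [h2]
  | succ n hn ih =>
    obtain ⟨T, h1, h2, h3⟩ := ih
    refine ⟨T ++ [(z, n + 1)], by simp [h1], by simp, ?_⟩
    refine List.isChain_append.2 ⟨h3, by simp, ?_⟩
    simp [h2]

/-- A monotone lattice path with steps of size at most one from `a` to `(z, ℓ)` meets every column
`i` between `a.1` and `z`, at a height between `a.2` and `ℓ`. -/
lemma chain_visits (z ℓ i : ℕ) (hi' : i ≤ z) (l : List (ℕ × ℕ)) : ∀ a : ℕ × ℕ,
    (a :: l).getLast? = some (z, ℓ) →
    (a :: l).IsChain (fun p q : ℕ × ℕ =>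
      (q.1 = p.1 ∨ q.1 = p.1 + 1) ∧ (q.2 = p.2 ∨ q.2 = p.2 + 1) ∧
      (q.1 = p.1 + 1 ∨ q.2 = p.2 + 1)) →
    a.2 ≤ ℓ ∧ (a.1 ≤ i → ∃ j, a.2 ≤ j ∧ j ≤ ℓ ∧ (i, j) ∈ a :: l) := by
  induction l with
  | nil =>
    intro a h _
    simp only [List.getLast?_singleton, Option.some.injEq] at h
    subst h
    refine ⟨le_rfl, fun hi => ⟨ℓ, le_rfl, le_rfl, ?_⟩⟩
    simp only [List.mem_singleton, Prod.mk.injEq, and_true]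
    exact le_antisymm hi' hi
  | cons b l ih =>
    intro a h hc
    rw [List.getLast?_cons_cons] at h
    rw [List.isChain_cons_cons] at hc
    obtain ⟨⟨h1, h2, -⟩, hc⟩ := hc
    obtain ⟨hb, hv⟩ := ih b h hc
    refine ⟨by omega, fun hi => ?_⟩
    by_cases hai : a.1 = i
    · exact ⟨a.2, le_rfl, by omega, by simp [← hai]⟩
    · obtain ⟨j, hj1, hj2, hj⟩ := hv (by omega)
      exact ⟨j, by omega, hj2, List.mem_cons_of_mem _ hj⟩

lemma IsTraversal.visits {z ℓ : ℕ} {T : List (ℕ × ℕ)} (hT : IsTraversal z ℓ T) {i : ℕ}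
    (hi : 1 ≤ i) (hi' : i ≤ z) : ∃ j, 1 ≤ j ∧ j ≤ ℓ ∧ (i, j) ∈ T := by
  obtain ⟨h1, h2, h3⟩ := hT
  cases T with
  | nil => simp at h1
  | cons a l =>
    simp only [List.head?_cons, Option.some.injEq] at h1
    subst h1
    exact (chain_visits z ℓ i hi' l _ h2 h3).2 hi

lemma le_foldr_max {α : Type*} (f : α → ℝ) (T : List α) {a : α} (ha : a ∈ T) :
    f a ≤ (T.map f).foldr max 0 := by
  induction T with
  | nil => simp at ha
  | cons b T ih =>
    rcases List.mem_cons.1 ha with rfl | h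
    · exact le_max_left _ _
    · exact (ih h).trans (le_max_right _ _)

lemma foldr_max_nonneg {α : Type*} (f : α → ℝ) (T : List α) : 0 ≤ (T.map f).foldr max 0 := by
  induction T with
  | nil => simp
  | cons b T ih => exact ih.trans (le_max_right _ _)

lemma foldr_max_le_add {α : Type*} (f g : α → ℝ) {δ : ℝ} (hδ : 0 ≤ δ) (T : List α)
    (h : ∀ a, f a ≤ g a + δ) : (T.map f).foldr max 0 ≤ (T.map g).foldr max 0 + δ := by
  induction T with
  | nil => simpa using hδ
  | cons b T ih =>
    refine max_le ((h b).trans ?_) (ih.trans ?_)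
    · gcongr; exact le_max_left _ _
    · gcongr; exact le_max_right _ _

lemma dFrechet_nonneg (z ℓ : ℕ) (p q : ℕ → ℝ) : 0 ≤ dFrechet z ℓ p q := by
  refine Real.sInf_nonneg ?_
  rintro r ⟨T, -, rfl⟩
  exact foldr_max_nonneg _ T

lemma dFrechet_le_add {z ℓ : ℕ} (hz : 1 ≤ z) (hℓ : 1 ≤ ℓ) (p p' q : ℕ → ℝ) {δ : ℝ} (hδ : 0 ≤ δ)
    (h : ∀ i, |p' i - p i| ≤ δ) : dFrechet z ℓ p' q ≤ dFrechet z ℓ p q + δ := by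
  rw [← sub_le_iff_le_add]
  obtain ⟨T₀, hT₀⟩ := exists_isTraversal z ℓ hz hℓ
  refine le_csInf ⟨_, T₀, hT₀, rfl⟩ ?_
  rintro r ⟨T, hT, rfl⟩
  rw [sub_le_iff_le_add]
  have hle : dFrechet z ℓ p' q ≤ (T.map (fun ij => dist (p' ij.1) (q ij.2))).foldr max 0 := by
    refine csInf_le ⟨0, ?_⟩ ⟨T, hT, rfl⟩
    rintro r ⟨S, -, rfl⟩
    exact foldr_max_nonneg _ S
  refine hle.trans (foldr_max_le_add _ _ hδ T fun ij => ?_)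
  have h1 := dist_triangle (p' ij.1) (p ij.1) (q ij.2)
  have h2 := h ij.1
  rw [← Real.dist_eq] at h2
  linarith

/-- The nearest entry of `q` is used, so the infimum over traversals need not be attained. -/
lemma exists_close {z ℓ : ℕ} (hℓ : 1 ≤ ℓ) (p q : ℕ → ℝ) {i : ℕ} (hi : i ∈ Finset.Icc 1 z) :
    ∃ j ∈ Finset.Icc 1 ℓ, |p i - q j| ≤ dFrechet z ℓ p q := by
  obtain ⟨hi1, hi2⟩ := Finset.mem_Icc.1 hi
  obtain ⟨j, hj, hmin⟩ := Finset.exists_min_image (Finset.Icc 1 ℓ) (fun j => |p i - q j|)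
    ⟨1, Finset.mem_Icc.2 ⟨le_rfl, hℓ⟩⟩
  refine ⟨j, hj, ?_⟩
  obtain ⟨T₀, hT₀⟩ := exists_isTraversal z ℓ (hi1.trans hi2) hℓ
  refine le_csInf ⟨_, T₀, hT₀, rfl⟩ ?_
  rintro r ⟨T, hT, rfl⟩
  obtain ⟨k, hk1, hk2, hk⟩ := hT.visits hi1 hi2
  refine (hmin k (Finset.mem_Icc.2 ⟨hk1, hk2⟩)).trans ?_
  exact le_foldr_max (fun ij : ℕ × ℕ => dist (p ij.1) (q ij.2)) T hk

/-- Every point within `D` of `c` is within `ε * D` of one of the first `⌈2 / ε⌉₊ + 1` points of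
the grid with mesh `ε * D` that starts at `c - D`; the grid is a single point when `D = 0`. -/
lemma exists_grid {ε D a c : ℝ} (hε : 0 < ε) (hD : 0 ≤ D) (h : |a - c| ≤ D) :
    ∃ k ∈ Finset.range (⌈2 / ε⌉₊ + 1), |(c - D + k * (ε * D)) - a| ≤ ε * D := by
  obtain ⟨h1, h2⟩ := abs_le.1 h
  rcases hD.eq_or_lt with rfl | hD
  · exact ⟨0, by simp, by rw [abs_le]; constructor <;> simp <;> linarith⟩
  have hm : 0 < ε * D := mul_pos hε hD
  have ht : 0 ≤ (a - c + D) / (ε * D) := div_nonneg (by linarith) hm.le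
  have hle := Nat.floor_le ht
  have hlt := Nat.lt_floor_add_one ((a - c + D) / (ε * D))
  rw [le_div_iff₀ hm] at hle
  rw [div_lt_iff₀ hm] at hlt
  refine ⟨⌊(a - c + D) / (ε * D)⌋₊, ?_, ?_⟩
  · rw [Finset.mem_range, Nat.lt_succ_iff]
    refine (Nat.floor_le_floor ?_).trans (Nat.floor_le_ceil _)
    rw [div_le_div_iff₀ hm hε]
    nlinarith
  · rw [abs_le]
    constructor <;> linarith

/-- value-domain reduction for time series.
Given a minimum-error `ℓ`-simplification of `x ∈ ℝ^z`, there is `x' ∈ ℝ^z` whose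
set of entry values has at most `ℓ·(⌈2/ε⌉+2)` elements and whose discrete Fréchet
distance to every `y ∈ ℝ^ℓ` is within a `(1±ε)` factor of that of `x`. -/
theorem stmt11 (z ℓ : ℕ) (hz : 1 ≤ z) (hℓ : 1 ≤ ℓ) (ε : ℝ)
    (hε : ε ∈ Set.Ioo (0 : ℝ) 1) (x xt : ℕ → ℝ)
    (hxt : ∀ y : ℕ → ℝ, dFrechet z ℓ x xt ≤ dFrechet z ℓ x y) :
    ∃ x' : ℕ → ℝ,
      ((Finset.Icc 1 z).image x').card ≤ ℓ * (⌈2 / ε⌉₊ + 2) ∧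
      ∀ y : ℕ → ℝ,
        (1 - ε) * dFrechet z ℓ x y ≤ dFrechet z ℓ x' y ∧
        dFrechet z ℓ x' y ≤ (1 + ε) * dFrechet z ℓ x y := by
  set D := dFrechet z ℓ x xt with hDdef
  have hD : 0 ≤ D := dFrechet_nonneg z ℓ x xt
  have hεD : 0 ≤ ε * D := mul_nonneg hε.1.le hD
  -- Outside `[1, z]` the entries of `x` are kept, so that the two curves are close at every index.
  have key : ∀ i, ∃ v : ℝ, |v - x i| ≤ ε * D ∧ (i ∈ Finset.Icc 1 z →
      ∃ j ∈ Finset.Icc 1 ℓ, ∃ k ∈ Finset.range (⌈2 / ε⌉₊ + 1), xt j - D + k * (ε * D) = v) := by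
    intro i
    by_cases hi : i ∈ Finset.Icc 1 z
    · obtain ⟨j, hj, hjD⟩ := exists_close hℓ x xt hi
      obtain ⟨k, hk, hkD⟩ := exists_grid hε.1 hD hjD
      exact ⟨_, hkD, fun _ => ⟨j, hj, k, hk, rfl⟩⟩
    · exact ⟨x i, by simpa using hεD, fun h => absurd h hi⟩
  choose x' hclose hval using key
  refine ⟨x', ?_, fun y => ?_⟩
  · have hsub : (Finset.Icc 1 z).image x' ⊆
        (Finset.Icc 1 ℓ ×ˢ Finset.range (⌈2 / ε⌉₊ + 1)).image
          (fun jk : ℕ × ℕ => xt jk.1 - D + jk.2 * (ε * D)) := by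
      intro v hv
      obtain ⟨i, hi, rfl⟩ := Finset.mem_image.1 hv
      obtain ⟨j, hj, k, hk, h⟩ := hval i hi
      exact Finset.mem_image.2 ⟨(j, k), Finset.mem_product.2 ⟨hj, hk⟩, h⟩
    refine (Finset.card_le_card hsub).trans (Finset.card_image_le.trans ?_)
    rw [Finset.card_product, Nat.card_Icc, Finset.card_range, Nat.add_sub_cancel]
    gcongr
    omega
  · have h1 := dFrechet_le_add hz hℓ x x' y hεD hclose
    have h2 := dFrechet_le_add hz hℓ x' x y hεD fun i => by rw [abs_sub_comm]; exact hclose i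
    have h3 := mul_le_mul_of_nonneg_left (hxt y) hε.1.le
    constructor <;> linarith
end

section
/- Let z, z', ℓ ≥ 1 be integers and let x ∈ ℝ^z and x' ∈ ℝ^{z'} be two time series with the same set of ℓ-profiles, i.e. D_{(x,ℓ)} = D_{(x',ℓ)}. Then for every y ∈ ℝ^ℓ: d_dF(x,y) = d_dF(x',y). -/
/-- The `j`-th traversal sector `S_j^{(x,T)} = {x_i : (i,j) ∈ T}`. -/
def sector (x : ℕ → ℝ) (T : List (ℕ × ℕ)) (j : ℕ) : Set ℝ :=
  {v | ∃ i : ℕ, (i, j) ∈ T ∧ v = x i}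

/-- The `ℓ`-profile of `(x,T)`: the sequence of pairs
`(min S_j^{(x,T)}, max S_j^{(x,T)})` for `j = 1,…,ℓ`. -/
noncomputable def profile (ℓ : ℕ) (x : ℕ → ℝ) (T : List (ℕ × ℕ)) :
    List (ℝ × ℝ) :=
  (List.range ℓ).map (fun j =>
    (sInf (sector x T (j + 1)), sSup (sector x T (j + 1))))

/-- `D_{(x,ℓ)}`: the set of all `ℓ`-profiles of `x` over all traversals. -/
noncomputable def profileSet (z ℓ : ℕ) (x : ℕ → ℝ) : Set (List (ℝ × ℝ)) :=
  {P | ∃ T : List (ℕ × ℕ), IsTraversal z ℓ T ∧ P = profile ℓ x T}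

/-- Along a chain of traversal steps from second index `a.2` to second index `ℓ`, the second
indices occurring are exactly those between `a.2` and `ℓ`. -/
lemma chain_snd_spec (z ℓ : ℕ) (L : List (ℕ × ℕ)) : ∀ a : ℕ × ℕ,
    (a :: L).getLast? = some (z, ℓ) →
    (a :: L).IsChain (fun p q =>
      (q.1 = p.1 ∨ q.1 = p.1 + 1) ∧ (q.2 = p.2 ∨ q.2 = p.2 + 1) ∧
      (q.1 = p.1 + 1 ∨ q.2 = p.2 + 1)) →
    (∀ p ∈ a :: L, a.2 ≤ p.2 ∧ p.2 ≤ ℓ) ∧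
    (∀ j, a.2 ≤ j → j ≤ ℓ → ∃ i, (i, j) ∈ a :: L) := by
  induction L with
  | nil =>
    intro a h _
    obtain rfl : a = (z, ℓ) := by simpa using h
    refine ⟨by simp, fun j h1 h2 => ⟨z, ?_⟩⟩
    obtain rfl : j = ℓ := le_antisymm h2 h1
    simp
  | cons b L ih =>
    intro a h hc
    rw [List.isChain_cons_cons] at hc
    obtain ⟨⟨-, hab, -⟩, hc⟩ := hc
    rw [List.getLast?_cons_cons] at h
    obtain ⟨h1, h2⟩ := ih b h hc
    have hb := h1 b (by simp)
    refine ⟨fun p hp => ?_, fun j hj hjl => ?_⟩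
    · rcases List.mem_cons.1 hp with rfl | hp
      · omega
      · have := h1 p hp
        omega
    · by_cases hja : j = a.2
      · exact ⟨a.1, by simp [hja]⟩
      · obtain ⟨i, hi⟩ := h2 j (by omega) hjl
        exact ⟨i, List.mem_cons_of_mem _ hi⟩

lemma IsTraversal.snd_spec {z ℓ : ℕ} {T : List (ℕ × ℕ)} (hT : IsTraversal z ℓ T) :
    (∀ p ∈ T, 1 ≤ p.2 ∧ p.2 ≤ ℓ) ∧ (∀ j, 1 ≤ j → j ≤ ℓ → ∃ i, (i, j) ∈ T) := by
  obtain ⟨h1, h2, h3⟩ := hT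
  cases T with
  | nil => simp at h1
  | cons a L =>
    obtain rfl : a = (1, 1) := by simpa using h1
    exact chain_snd_spec z ℓ L (1, 1) h2 h3

lemma sector_finite (x : ℕ → ℝ) (T : List (ℕ × ℕ)) (j : ℕ) : (sector x T j).Finite := by
  refine ((T.finite_toSet).image (fun p => x p.1)).subset ?_
  rintro v ⟨i, hi, rfl⟩
  exact ⟨(i, j), hi, rfl⟩

/-- The cost of a traversal `T`: the largest distance between matched points, in the form used by
`dFrechet`. -/
noncomputable def traversalCost (x y : ℕ → ℝ) (T : List (ℕ × ℕ)) : ℝ :=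
  (T.map (fun ij => dist (x ij.1) (y ij.2))).foldr max 0

lemma foldr_max_le_iff (L : List ℝ) (r : ℝ) :
    L.foldr max 0 ≤ r ↔ 0 ≤ r ∧ ∀ v ∈ L, v ≤ r := by
  induction L with
  | nil => simp
  | cons a L ih =>
    simp only [List.foldr_cons, max_le_iff, ih, List.forall_mem_cons]
    tauto

lemma traversalCost_le_iff (x y : ℕ → ℝ) (T : List (ℕ × ℕ)) (r : ℝ) :
    traversalCost x y T ≤ r ↔ 0 ≤ r ∧ ∀ p ∈ T, dist (x p.1) (y p.2) ≤ r := by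
  simp only [traversalCost, foldr_max_le_iff, List.forall_mem_map]

/-- Two traversals with the same profile have the same cost (apply this in both directions):
`x i` lies between the extremes of its sector, which are also values of `x'` matched to the same
`y j`. -/
lemma traversalCost_le_of_profile_eq {z z' ℓ : ℕ} {x x' : ℕ → ℝ} {T T' : List (ℕ × ℕ)}
    (hT : IsTraversal z ℓ T) (hT' : IsTraversal z' ℓ T')
    (h : profile ℓ x T = profile ℓ x' T') (y : ℕ → ℝ) :
    traversalCost x y T ≤ traversalCost x' y T' := by
  obtain ⟨hc0, hc⟩ := (traversalCost_le_iff x' y T' _).1 le_rfl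
  refine (traversalCost_le_iff _ _ _ _).2 ⟨hc0, ?_⟩
  rintro ⟨i, j⟩ hij
  obtain ⟨hj1, hjl⟩ := hT.snd_spec.1 _ hij
  obtain ⟨k, rfl⟩ : ∃ k, j = k + 1 := ⟨j - 1, by simp only at hj1; omega⟩
  obtain ⟨hinf, hsup⟩ : sInf (sector x T (k + 1)) = sInf (sector x' T' (k + 1)) ∧
      sSup (sector x T (k + 1)) = sSup (sector x' T' (k + 1)) := by
    have := List.map_inj_left.1 h k (List.mem_range.2 hjl)
    simpa using this
  have hfin := sector_finite x T (k + 1)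
  have hfin' := sector_finite x' T' (k + 1)
  have hne' : (sector x' T' (k + 1)).Nonempty := by
    obtain ⟨i', hi'⟩ := hT'.snd_spec.2 _ hj1 hjl
    exact ⟨x' i', i', hi', rfl⟩
  have hmem : x i ∈ sector x T (k + 1) := ⟨i, hij, rfl⟩
  have hlo := csInf_le hfin.bddBelow hmem
  have hhi := le_csSup hfin.bddAbove hmem
  obtain ⟨i₁, h₁, e₁⟩ := hne'.csInf_mem hfin'
  obtain ⟨i₂, h₂, e₂⟩ := hne'.csSup_mem hfin'
  rw [hinf, e₁] at hlo
  rw [hsup, e₂] at hhi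
  have b₁ := hc _ h₁
  have b₂ := hc _ h₂
  simp only [Real.dist_eq, abs_le] at b₁ b₂ ⊢
  constructor <;> linarith

lemma cost_set_subset {z z' ℓ : ℕ} {x x' : ℕ → ℝ}
    (h : profileSet z ℓ x ⊆ profileSet z' ℓ x') (y : ℕ → ℝ) :
    {r : ℝ | ∃ T, IsTraversal z ℓ T ∧ r = traversalCost x y T} ⊆
      {r : ℝ | ∃ T, IsTraversal z' ℓ T ∧ r = traversalCost x' y T} := by
  rintro r ⟨T, hT, rfl⟩
  obtain ⟨T', hT', e⟩ := h ⟨T, hT, rfl⟩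
  exact ⟨T', hT', le_antisymm (traversalCost_le_of_profile_eq hT hT' e y)
    (traversalCost_le_of_profile_eq hT' hT e.symm y)⟩

/-- two time series with the same set of `ℓ`-profiles have the same
discrete Fréchet distance to every time series of complexity `ℓ`. -/
theorem stmt12 (z z' ℓ : ℕ) (hz : 1 ≤ z) (hz' : 1 ≤ z') (hℓ : 1 ≤ ℓ)
    (x x' : ℕ → ℝ) (hprof : profileSet z ℓ x = profileSet z' ℓ x')
    (y : ℕ → ℝ) :
    dFrechet z ℓ x y = dFrechet z' ℓ x' y :=
  congrArg sInf ((cost_set_subset hprof.subset y).antisymm (cost_set_subset hprof.superset y))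
end

section
/- Let z, ℓ ≥ 1 be integers and x ∈ ℝ^z a time series, and let s := |set(x)| and N := Σ_{r=1}^{ℓ} s^{2r}. Then there exist an integer z' with 1 ≤ z' ≤ 2^N and a time series x' ∈ ℝ^{z'} with set(x') ⊆ set(x) such that x and x' have the same set of ℓ-profiles, i.e. D_{(x',ℓ)} = D_{(x,ℓ)}. -/
/-- Traversals generated one index pair at a time, from the front. -/
inductive Trav : ℕ → ℕ → List (ℕ × ℕ) → Prop
  | one : Trav 1 1 [(1, 1)]
  | horiz {t r T} : Trav t r T → Trav t (r + 1) (T ++ [(t, r + 1)])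
  | vert {t r T} : Trav t r T → Trav (t + 1) r (T ++ [(t + 1, r)])
  | diag {t r T} : Trav t r T → Trav (t + 1) (r + 1) (T ++ [(t + 1, r + 1)])

/-- `Reach x t P`: the list `P`, read backwards, is a prefix profile of `x` of shape
`(t, P.length)`. The last sector is stored at the head of `P`. -/
inductive Reach (x : ℕ → ℝ) : ℕ → List (ℝ × ℝ) → Prop
  | one : Reach x 1 [(x 1, x 1)]
  | horiz {t P} : Reach x t P → Reach x t ((x t, x t) :: P)
  | vert {t p P} : Reach x t (p :: P) →
      Reach x (t + 1) ((min (x (t + 1)) p.1, max (x (t + 1)) p.2) :: P)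
  | diag {t P} : Reach x t P → Reach x (t + 1) ((x (t + 1), x (t + 1)) :: P)

/-! ### Traversals and their profiles -/

lemma Trav.isTraversal {t r : ℕ} {T : List (ℕ × ℕ)} (h : Trav t r T) : IsTraversal t r T := by
  have key : ∀ {t r t' r' : ℕ} {T : List (ℕ × ℕ)}, IsTraversal t r T →
      (t' = t ∨ t' = t + 1) → (r' = r ∨ r' = r + 1) → (t' = t + 1 ∨ r' = r + 1) →
      IsTraversal t' r' (T ++ [(t', r')]) := by
    rintro t r t' r' T ⟨h1, h2, h3⟩ ha hb hc
    refine ⟨by simp [List.head?_append, h1], by simp, ?_⟩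
    refine List.isChain_append.2 ⟨h3, by simp, ?_⟩
    intro p hp q hq
    simp only [h2, Option.mem_def, Option.some.injEq, List.head?_cons] at hp hq
    subst hp hq
    exact ⟨ha, hb, hc⟩
  induction h with
  | one => exact ⟨rfl, rfl, List.isChain_singleton _⟩
  | horiz _ ih => exact key ih (by simp) (by simp) (by simp)
  | vert _ ih => exact key ih (by simp) (by simp) (by simp)
  | diag _ ih => exact key ih (by simp) (by simp) (by simp)

lemma IsTraversal.trav {t r : ℕ} {T : List (ℕ × ℕ)} (h : IsTraversal t r T) : Trav t r T := by
  induction T using List.reverseRecOn generalizing t r with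
  | nil => simp [IsTraversal] at h
  | append_singleton T p ih =>
    obtain ⟨h1, h2, h3⟩ := h
    simp only [List.getLast?_append, List.getLast?_singleton, Option.some_or,
      Option.some.injEq] at h2
    subst h2
    rcases List.eq_nil_or_concat T with rfl | ⟨L, q, hL⟩
    · simp only [List.nil_append, List.head?_cons, Option.some.injEq, Prod.mk.injEq] at h1
      obtain ⟨rfl, rfl⟩ := h1
      exact Trav.one
    · obtain ⟨h4, -, h5⟩ := List.isChain_append.1 h3
      have hlast : T.getLast? = some q := by simp [hL]
      have hq := h5 q (by simp [hlast]) (t, r) (by simp)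
      have hT : T ≠ [] := by simp [hL]
      have hh : T.head? = some (1, 1) := by
        rwa [List.head?_append_of_ne_nil _ hT] at h1
      obtain ⟨a, b⟩ := q
      have hT' := ih ⟨hh, hlast, h4⟩
      obtain ⟨ha, hb, hc⟩ := hq
      simp only at ha hb hc
      rcases ha with rfl | rfl <;> rcases hb with rfl | rfl
      · omega
      · exact hT'.horiz
      · exact hT'.vert
      · exact hT'.diag

lemma Trav.snd_le {t r : ℕ} {T : List (ℕ × ℕ)} (h : Trav t r T) : ∀ p ∈ T, p.2 ≤ r := by
  induction h with
  | one => simp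
  | horiz _ ih => simp only [List.mem_append, List.mem_singleton]; grind
  | vert _ ih => simp only [List.mem_append, List.mem_singleton]; grind
  | diag _ ih => simp only [List.mem_append, List.mem_singleton]; grind

lemma Trav.mem {t r : ℕ} {T : List (ℕ × ℕ)} (h : Trav t r T) : (t, r) ∈ T := by
  cases h <;> simp

lemma Trav.pos {t r : ℕ} {T : List (ℕ × ℕ)} (h : Trav t r T) : 1 ≤ r := by
  induction h <;> omega

lemma sector_append_of_ne (x : ℕ → ℝ) (T : List (ℕ × ℕ)) {t r j : ℕ} (h : j ≠ r) :
    sector x (T ++ [(t, r)]) j = sector x T j := by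
  ext v; simp [sector, h]

lemma sector_append_self (x : ℕ → ℝ) (T : List (ℕ × ℕ)) (t r : ℕ) :
    sector x (T ++ [(t, r)]) r = insert (x t) (sector x T r) := by
  ext v
  simp only [sector, List.mem_append, List.mem_singleton, Prod.mk.injEq, and_true,
    Set.mem_ofPred_eq, Set.mem_insert_iff]
  grind

lemma profile_succ (r : ℕ) (x : ℕ → ℝ) (T : List (ℕ × ℕ)) :
    (profile (r + 1) x T).reverse =
      (sInf (sector x T (r + 1)), sSup (sector x T (r + 1))) :: (profile r x T).reverse := by
  simp [profile, List.range_succ]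

lemma profile_append (r : ℕ) (x : ℕ → ℝ) (T : List (ℕ × ℕ)) (t : ℕ) :
    profile r x (T ++ [(t, r + 1)]) = profile r x T := by
  refine List.map_congr_left fun j hj => ?_
  rw [List.mem_range] at hj
  rw [sector_append_of_ne x T (by omega)]

/-- Advancing the second index opens a new one-point sector. -/
lemma Trav.profile_new {t r : ℕ} {T : List (ℕ × ℕ)} (h : Trav t r T) (x : ℕ → ℝ) (t' : ℕ) :
    (profile (r + 1) x (T ++ [(t', r + 1)])).reverse = (x t', x t') :: (profile r x T).reverse := by
  have hempty : sector x T (r + 1) = ∅ := by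
    ext v
    simp only [sector, Set.mem_ofPred_eq, Set.mem_empty_iff_false, iff_false]
    rintro ⟨i, hi, -⟩
    have := h.snd_le _ hi
    simp at this
  rw [profile_succ, profile_append, sector_append_self, hempty]
  simp

/-- Keeping the second index inserts a value into the last sector. -/
lemma Trav.profile_upd {t r : ℕ} {T : List (ℕ × ℕ)} (h : Trav t (r + 1) T) (x : ℕ → ℝ) (t' : ℕ) :
    (profile (r + 1) x (T ++ [(t', r + 1)])).reverse =
      (min (x t') (sInf (sector x T (r + 1))), max (x t') (sSup (sector x T (r + 1)))) ::
        (profile r x T).reverse := by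
  have hne : (sector x T (r + 1)).Nonempty := ⟨x t, t, h.mem, rfl⟩
  have hfin := sector_finite x T (r + 1)
  rw [profile_succ, profile_append, sector_append_self, csInf_insert hfin.bddBelow hne,
    csSup_insert hfin.bddAbove hne]

lemma Trav.reach {t r : ℕ} {T : List (ℕ × ℕ)} (h : Trav t r T) (x : ℕ → ℝ) :
    Reach x t (profile r x T).reverse := by
  induction h with
  | one => simpa [profile, sector, List.range_succ] using Reach.one (x := x)
  | horiz h ih => rw [h.profile_new]; exact ih.horiz
  | diag h ih => rw [h.profile_new]; exact ih.diag
  | @vert t r T h ih =>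
    obtain ⟨k, rfl⟩ : ∃ k, r = k + 1 := ⟨r - 1, by have := h.pos; omega⟩
    rw [h.profile_upd]
    rw [profile_succ] at ih
    exact ih.vert

lemma Reach.exists_trav {x : ℕ → ℝ} {t : ℕ} {P : List (ℝ × ℝ)} (h : Reach x t P) :
    ∃ T, Trav t P.length T ∧ (profile P.length x T).reverse = P := by
  induction h with
  | one => exact ⟨_, Trav.one, by simp [profile, sector, List.range_succ]⟩
  | horiz _ ih =>
    obtain ⟨T, hT, hP⟩ := ih
    exact ⟨_, hT.horiz, by rw [List.length_cons, hT.profile_new, hP]⟩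
  | diag _ ih =>
    obtain ⟨T, hT, hP⟩ := ih
    exact ⟨_, hT.diag, by rw [List.length_cons, hT.profile_new, hP]⟩
  | vert _ ih =>
    obtain ⟨T, hT, hP⟩ := ih
    refine ⟨_, hT.vert, ?_⟩
    rw [List.length_cons, profile_succ, List.cons.injEq] at hP
    obtain ⟨rfl, hP⟩ := hP
    rw [List.length_cons] at hT
    simp only [List.length_cons]
    rw [hT.profile_upd, hP]

lemma mem_profileSet_iff {z ℓ : ℕ} {x : ℕ → ℝ} {P : List (ℝ × ℝ)} :
    P ∈ profileSet z ℓ x ↔ P.length = ℓ ∧ Reach x z P.reverse := by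
  constructor
  · rintro ⟨T, hT, rfl⟩
    exact ⟨by simp [profile], hT.trav.reach x⟩
  · rintro ⟨rfl, h⟩
    obtain ⟨T, hT, hP⟩ := h.exists_trav
    rw [List.length_reverse] at hT hP
    exact ⟨T, hT.isTraversal, (List.reverse_injective hP).symm⟩

/-! ### Deterministic evolution of the set of prefix profiles -/

lemma Reach.congr {x y : ℕ → ℝ} {t : ℕ} {P : List (ℝ × ℝ)} (h : Reach x t P)
    (hxy : ∀ i, 1 ≤ i → i ≤ t → y i = x i) : Reach y t P := by
  induction h with
  | one => rw [← hxy 1 le_rfl le_rfl]; exact Reach.one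
  | @horiz t P h ih =>
    have ht : 1 ≤ t := by clear ih hxy; induction h <;> omega
    rw [← hxy t ht le_rfl]
    exact (ih hxy).horiz
  | @vert t p P h ih =>
    rw [← hxy (t + 1) (by omega) le_rfl]
    exact (ih fun i h1 h2 => hxy i h1 (by omega)).vert
  | @diag t P h ih =>
    rw [← hxy (t + 1) (by omega) le_rfl]
    exact (ih fun i h1 h2 => hxy i h1 (by omega)).diag

/-- If every truncated prefix profile of `x` at time `s` is one of `y` at time `s'`, and the two
series agree from there on, then the inclusion persists at all later times. -/
lemma Reach.shift {ℓ s s' : ℕ} {x y : ℕ → ℝ} (hs : 1 ≤ s)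
    (h0 : ∀ P, Reach x s P → P.length ≤ ℓ → Reach y s' P)
    (hxy : ∀ i, y (s' + i + 1) = x (s + i + 1)) {t : ℕ} {P : List (ℝ × ℝ)} (h : Reach x t P)
    (hP : P.length ≤ ℓ) : ∀ i, t = s + i → Reach y (s' + i) P := by
  induction h with
  | one =>
    intro i hi
    obtain ⟨rfl, rfl⟩ : i = 0 ∧ s = 1 := by omega
    exact h0 _ Reach.one hP
  | @horiz t P h ih =>
    rintro (_ | i) rfl
    · exact h0 _ h.horiz hP
    · have := ih (by simp at hP; omega) (i + 1) rfl
      rw [show x (s + (i + 1)) = y (s' + (i + 1)) from (hxy i).symm]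
      exact this.horiz
  | @vert t p P h ih =>
    rintro (_ | i) hi
    · obtain rfl : t + 1 = s := hi
      exact h0 _ h.vert hP
    · obtain rfl : t = s + i := by omega
      rw [← hxy i]
      exact (ih (by simpa using hP) i rfl).vert
  | @diag t P h ih =>
    rintro (_ | i) hi
    · obtain rfl : t + 1 = s := hi
      exact h0 _ h.diag hP
    · obtain rfl : t = s + i := by omega
      rw [← hxy i]
      exact (ih (by simp at hP; omega) i rfl).diag

/-! ### Counting and shortening -/

/-- The nonempty lists of length at most `ℓ` of pairs of elements of `A`. -/
noncomputable def profileUniverse (A : Finset ℝ) (ℓ : ℕ) : Finset (List (ℝ × ℝ)) :=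
  open Classical in
  (Finset.Icc 1 ℓ).biUnion fun r =>
    (Fintype.piFinset fun _ : Fin r => A ×ˢ A).image List.ofFn

lemma card_profileUniverse_le (A : Finset ℝ) (ℓ : ℕ) :
    (profileUniverse A ℓ).card ≤ ∑ r ∈ Finset.Icc 1 ℓ, A.card ^ (2 * r) := by
  classical
  refine Finset.card_biUnion_le.trans (Finset.sum_le_sum fun r _ => ?_)
  refine Finset.card_image_le.trans (le_of_eq ?_)
  rw [Fintype.card_piFinset_const, Finset.card_product, pow_mul, sq]

lemma Reach.mem_profileUniverse {A : Finset ℝ} {ℓ z t : ℕ} {x : ℕ → ℝ}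
    (hx : ∀ i, 1 ≤ i → i ≤ z → x i ∈ A) {P : List (ℝ × ℝ)} (h : Reach x t P) (ht : t ≤ z)
    (hP : P.length ≤ ℓ) : P ∈ profileUniverse A ℓ := by
  have key : 1 ≤ t ∧ 1 ≤ P.length ∧ ∀ p ∈ P, p ∈ A ×ˢ A := by
    clear hP
    induction h with
    | one => simpa using hx 1 le_rfl ht
    | @horiz t P h ih =>
      obtain ⟨h1, h2, h3⟩ := ih ht
      have := hx t h1 ht
      refine ⟨h1, by simp, ?_⟩
      rintro p (_ | ⟨_, hp⟩)
      · simpa using this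
      · exact h3 p hp
    | @diag t P h ih =>
      obtain ⟨h1, h2, h3⟩ := ih (by omega)
      have := hx (t + 1) (by omega) ht
      refine ⟨by omega, by simp, ?_⟩
      rintro p (_ | ⟨_, hp⟩)
      · simpa using this
      · exact h3 p hp
    | @vert t q P h ih =>
      obtain ⟨h1, h2, h3⟩ := ih (by omega)
      have := hx (t + 1) (by omega) ht
      have hq := Finset.mem_product.1 (h3 q (by simp))
      refine ⟨by omega, by simp, ?_⟩
      rintro p (_ | ⟨_, hp⟩)
      · refine Finset.mem_product.2 ⟨?_, ?_⟩
        · rcases min_choice (x (t + 1)) q.1 with h | h <;> simp only [h]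
          exacts [this, hq.1]
        · rcases max_choice (x (t + 1)) q.2 with h | h <;> simp only [h]
          exacts [this, hq.2]
      · exact h3 p (List.mem_cons_of_mem _ hp)
  classical
  obtain ⟨-, h1, h2⟩ := key
  refine Finset.mem_biUnion.2 ⟨P.length, Finset.mem_Icc.2 ⟨h1, hP⟩, ?_⟩
  exact Finset.mem_image.2 ⟨P.get, Fintype.mem_piFinset.2 fun i => h2 _ (List.get_mem _ _),
    List.ofFn_get P⟩

/-- If two times have the same truncated prefix profiles, the entries in between can be deleted. -/
lemma reach_cut_iff {ℓ t d : ℕ} {x : ℕ → ℝ} (ht : 1 ≤ t)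
    (h : ∀ P : List (ℝ × ℝ), P.length ≤ ℓ → (Reach x t P ↔ Reach x (t + d) P)) (e : ℕ)
    (P : List (ℝ × ℝ)) (hP : P.length ≤ ℓ) :
    Reach (fun i => if i ≤ t then x i else x (i + d)) (t + e) P ↔ Reach x (t + d + e) P := by
  set y : ℕ → ℝ := fun i => if i ≤ t then x i else x (i + d) with hy
  have hle : ∀ i, i ≤ t → y i = x i := fun i hi => by simp [hy, hi]
  have hgt : ∀ i, y (t + i + 1) = x (t + d + i + 1) := fun i => by
    have : ¬ t + i + 1 ≤ t := by omega
    simp only [hy, this, if_false]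
    congr 1; omega
  constructor
  · intro hR
    refine hR.shift (ℓ := ℓ) ht (fun Q hQ hl => ?_) (fun i => (hgt i).symm) hP e rfl
    exact (h Q hl).1 (hQ.congr fun i _ hi => (hle i hi).symm)
  · intro hR
    refine hR.shift (ℓ := ℓ) (by omega) (fun Q hQ hl => ?_) hgt hP e rfl
    exact ((h Q hl).2 hQ).congr fun i _ hi => hle i hi

lemma exists_short (A : Finset ℝ) (ℓ : ℕ) (z : ℕ) : ∀ x : ℕ → ℝ, 1 ≤ z →
    (∀ i, 1 ≤ i → i ≤ z → x i ∈ A) →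
    ∃ (z' : ℕ) (x' : ℕ → ℝ), 1 ≤ z' ∧ z' ≤ 2 ^ (profileUniverse A ℓ).card ∧
      (∀ i, 1 ≤ i → i ≤ z' → x' i ∈ A) ∧
      ∀ P : List (ℝ × ℝ), P.length ≤ ℓ → (Reach x' z' P ↔ Reach x z P) := by
  classical
  induction z using Nat.strong_induction_on with
  | _ z ih =>
  intro x hz hx
  by_cases hle : z ≤ 2 ^ (profileUniverse A ℓ).card
  · exact ⟨z, x, hz, hle, hx, fun _ _ => Iff.rfl⟩
  obtain ⟨a, ha, b, hb, hab, hF⟩ := Finset.exists_ne_map_eq_of_card_lt_of_maps_to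
    (s := Finset.Icc 1 z) (t := (profileUniverse A ℓ).powerset)
    (f := fun t => (profileUniverse A ℓ).filter (Reach x t))
    (by rw [Finset.card_powerset, Nat.card_Icc]; omega)
    (fun t _ => Finset.mem_coe.2 (Finset.mem_powerset.2 (Finset.filter_subset _ _)))
  wlog hlt : a < b generalizing a b
  · exact this b hb a ha hab.symm hF.symm (by omega)
  rw [Finset.mem_Icc] at ha hb
  obtain ⟨d, rfl⟩ := Nat.exists_eq_add_of_lt hlt
  obtain ⟨e, rfl⟩ := Nat.exists_eq_add_of_le hb.2
  have hiff : ∀ P : List (ℝ × ℝ), P.length ≤ ℓ → (Reach x a P ↔ Reach x (a + (d + 1)) P) := by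
    intro P hP
    have := Finset.ext_iff.1 hF P
    simp only [Finset.mem_filter] at this
    constructor
    · intro h
      exact (this.1 ⟨h.mem_profileUniverse hx ha.2 hP, h⟩).2
    · intro h
      exact (this.2 ⟨h.mem_profileUniverse hx hb.2 hP, h⟩).2
  obtain ⟨z', x', h1, h2, h3, h4⟩ := ih (a + e) (by omega)
    (fun i => if i ≤ a then x i else x (i + (d + 1))) (by omega) (by
      intro i hi1 hi2
      split_ifs
      · exact hx i hi1 (by omega)
      · exact hx _ (by omega) (by omega))
  exact ⟨z', x', h1, h2, h3, fun P hP => (h4 P hP).trans (reach_cut_iff ha.1 hiff e P hP)⟩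

/-- every time series `x ∈ ℝ^z` has an equivalent time series
`x' ∈ ℝ^{z'}` with `z' ≤ 2^N` (where `s = |set(x)|` and `N = Σ_{r=1}^{ℓ} s^{2r}`),
entry values in `set(x)`, and the same set of `ℓ`-profiles. -/
theorem stmt13 (z ℓ : ℕ) (hz : 1 ≤ z) (hℓ : 1 ≤ ℓ) (x : ℕ → ℝ) :
    ∃ (z' : ℕ) (x' : ℕ → ℝ),
      1 ≤ z' ∧
      z' ≤ 2 ^ (∑ r ∈ Finset.Icc 1 ℓ, ((Finset.Icc 1 z).image x).card ^ (2 * r)) ∧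
      (Finset.Icc 1 z').image x' ⊆ (Finset.Icc 1 z).image x ∧
      profileSet z' ℓ x' = profileSet z ℓ x := by
  obtain ⟨z', x', h1, h2, h3, h4⟩ := exists_short ((Finset.Icc 1 z).image x) ℓ z x hz
    (fun i hi1 hi2 => Finset.mem_image_of_mem x (Finset.mem_Icc.2 ⟨hi1, hi2⟩))
  refine ⟨z', x', h1, h2.trans (Nat.pow_le_pow_right (by norm_num) (card_profileUniverse_le _ _)),
    ?_, ?_⟩
  · refine Finset.image_subset_iff.2 fun i hi => ?_
    rw [Finset.mem_Icc] at hi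
    exact h3 i hi.1 hi.2
  · ext P
    rw [mem_profileSet_iff, mem_profileSet_iff]
    exact and_congr_right fun hP => h4 P.reverse (by simp [hP])
end

section
/- There exists a constant C > 0 such that for all integers d, z ≥ 1, every sequence π of z points in ℝ^d, and every r > 0, there exist sequences σ_1,…,σ_N of z points in ℝ^d with N ≤ 2^{C·d·z} such that every sequence τ of z points in ℝ^d with d_dF(π,τ) ≤ r satisfies d_dF(σ_i,τ) ≤ r/2 for some i ∈ {1,…,N}. (Equivalently: every ball of the discrete Fréchet distance on complexity-z polygonal curves in ℝ^d can be covered by 2^{O(dz)} balls of half the radius, so the doubling dimension of this space is O(dz).) -/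
/-- A traversal contains the graph of a monotone map from second to first indices. -/
lemma exists_monotone_of_isChain (T : List (ℕ × ℕ)) : ∀ a b : ℕ × ℕ,
    T.head? = some a → T.getLast? = some b →
    T.IsChain (fun p q =>
      (q.1 = p.1 ∨ q.1 = p.1 + 1) ∧ (q.2 = p.2 ∨ q.2 = p.2 + 1) ∧
      (q.1 = p.1 + 1 ∨ q.2 = p.2 + 1)) →
    ∃ f : ℕ → ℕ, Monotone f ∧ (∀ j, a.1 ≤ f j ∧ f j ≤ b.1) ∧
      ∀ j, a.2 ≤ j → j ≤ b.2 → (f j, j) ∈ T := by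
  induction T with
  | nil => intro a b h; simp at h
  | cons x T ih =>
    intro a b ha hb hc
    obtain rfl : x = a := by simpa using ha
    cases T with
    | nil =>
      obtain rfl : x = b := by simpa using hb
      refine ⟨fun _ => x.1, monotone_const, fun _ => ⟨le_rfl, le_rfl⟩, fun j h1 h2 => ?_⟩
      obtain rfl : j = x.2 := le_antisymm h2 h1
      simp
    | cons y T =>
      rw [List.isChain_cons_cons] at hc
      obtain ⟨hxy, hc⟩ := hc
      obtain ⟨f, hf, hab, hm⟩ := ih y b (by simp) (by simpa using hb) hc
      refine ⟨fun j => if j ≤ x.2 then x.1 else f j, ?_, ?_, ?_⟩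
      · intro i j hij
        have := hf hij
        have := hab j
        dsimp only
        split_ifs <;> omega
      · intro j
        have := hab j
        dsimp only
        split_ifs <;> omega
      · intro j h1 h2
        by_cases h : j ≤ x.2
        · obtain rfl : j = x.2 := le_antisymm h h1
          simp
        · have := hm j (by omega) h2
          simp only [h, if_false]
          exact List.mem_cons_of_mem _ this

lemma foldr_max_le_iff_s15 (l : List ℝ) (c : ℝ) :
    l.foldr max 0 ≤ c ↔ 0 ≤ c ∧ ∀ x ∈ l, x ≤ c := by
  induction l with
  | nil => simp
  | cons a l ih => simp only [List.foldr_cons, max_le_iff, ih, List.forall_mem_cons]; tauto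

/-- The diagonal traversal. -/
lemma isTraversal_diag (z : ℕ) (hz : 1 ≤ z) :
    IsTraversal z z ((List.range z).map fun k => (k + 1, k + 1)) := by
  obtain ⟨n, rfl⟩ : ∃ n, z = n + 1 := ⟨z - 1, by omega⟩
  refine ⟨?_, ?_, ?_⟩
  · simp [List.range_succ_eq_map]
  · simp [List.range_succ]
  · change List.IsChain _ _
    rw [List.isChain_map]
    refine (List.isChain_range_succ _ n).2 ?_
    intro m _
    simp

lemma dFrechet_le_of_forall_dist_le {E : Type*} [PseudoMetricSpace E] (z : ℕ) (hz : 1 ≤ z)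
    (p q : ℕ → E) (c : ℝ) (hc : 0 ≤ c) (h : ∀ k < z, dist (p (k + 1)) (q (k + 1)) ≤ c) :
    dFrechet z z p q ≤ c := by
  rw [dFrechet]
  refine (csInf_le ⟨0, ?_⟩ (Set.mem_ofPred.2 ⟨_, isTraversal_diag z hz, rfl⟩)).trans ?_
  · rintro _ ⟨T, -, rfl⟩
    exact ((foldr_max_le_iff_s15 _ _).1 le_rfl).1
  · rw [foldr_max_le_iff_s15]
    refine ⟨hc, ?_⟩
    simpa using h

lemma exists_monotone_of_dFrechet_lt {E : Type*} [PseudoMetricSpace E] (z : ℕ) (hz : 1 ≤ z)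
    (p q : ℕ → E) (c : ℝ) (h : dFrechet z z p q < c) :
    ∃ f : Fin z →o Fin z, ∀ j : Fin z, dist (p (f j + 1)) (q (j + 1)) ≤ c := by
  obtain ⟨_, ⟨T, ⟨h1, h2, h3⟩, rfl⟩, hlt⟩ :=
    exists_lt_of_csInf_lt (by exact ⟨_, _, isTraversal_diag z hz, rfl⟩) h
  obtain ⟨f, hf, hab, hm⟩ := exists_monotone_of_isChain T _ _ h1 h2 h3
  simp only at hab hm
  have hT := ((foldr_max_le_iff_s15 _ _).1 hlt.le).2
  refine ⟨⟨fun j => ⟨f (j + 1) - 1, by have := hab (j + 1); omega⟩, ?_⟩, fun j => ?_⟩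
  · intro i j hij
    have : f (i + 1) ≤ f (j + 1) := hf (by simpa using hij)
    simp only [Fin.mk_le_mk]
    omega
  · have := hm (j + 1) (by omega) (by omega)
    have h' := hT _ (List.mem_map_of_mem (f := fun ij : ℕ × ℕ => dist (p ij.1) (q ij.2)) this)
    have e : f (j + 1) - 1 + 1 = f (j + 1) := by have := hab (j + 1); omega
    change dist (p (f (j + 1) - 1 + 1)) _ ≤ c
    rw [e]
    exact h'

lemma card_orderHom_le (z : ℕ) : Nat.card (Fin z →o Fin z) ≤ 4 ^ z := by
  let g (f : Fin z →o Fin z) (j : Fin z) : Fin (2 * z) := ⟨f j + j, by omega⟩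
  have hg (f) : StrictMono (g f) := by
    intro i j hij
    have : (f i : ℕ) ≤ f j := f.monotone hij.le
    have : (i : ℕ) < j := hij
    simp only [g, Fin.mk_lt_mk]
    omega
  have hinj : Function.Injective (fun f : Fin z →o Fin z => Set.range (g f)) := by
    intro f f' h
    have h' := (hg f).range_inj (hg f') |>.1 h
    ext j
    have := congrArg Fin.val (congrFun h' j)
    simpa [g] using this
  have := Nat.card_le_card_of_injective _ hinj
  refine this.trans_eq ?_
  simp [pow_mul]

/-- A `1`-separated subset of the ball of radius `2` of maximal cardinality is a `1`-net. -/
lemma exists_net (d : ℕ) : ∃ S : Finset (EuclideanSpace ℝ (Fin d)), S.card ≤ 5 ^ d ∧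
    ∀ x : EuclideanSpace ℝ (Fin d), ‖x‖ ≤ 2 → ∃ c ∈ S, ‖x - c‖ ≤ 1 := by
  classical
  let P (n : ℕ) : Prop := ∃ S : Finset (EuclideanSpace ℝ (Fin d)), S.card = n ∧
    (∀ c ∈ S, ‖c‖ ≤ 2) ∧ ∀ c ∈ S, ∀ c' ∈ S, c ≠ c' → 1 ≤ ‖c - c'‖
  have hb (n) (h : P n) : n ≤ 5 ^ d := by
    obtain ⟨S, rfl, h1, h2⟩ := h
    simpa using Besicovitch.card_le_of_separated S h1 h2
  have h0 : P 0 := ⟨∅, by simp⟩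
  obtain ⟨S, hS, h1, h2⟩ : P (Nat.findGreatest P (5 ^ d)) :=
    Nat.findGreatest_spec (Nat.zero_le _) h0
  refine ⟨S, hS ▸ Nat.findGreatest_le _, fun x hx => ?_⟩
  by_contra! hcon
  have hxS : x ∉ S := fun h => by simpa using (hcon x h).trans_le' zero_le_one
  have hP : P (S.card + 1) := by
    refine ⟨insert x S, Finset.card_insert_of_notMem hxS, ?_, ?_⟩
    · simpa using ⟨hx, h1⟩
    · intro c hc c' hc' hne
      rw [Finset.mem_insert] at hc hc'
      rcases hc with rfl | hc <;> rcases hc' with rfl | hc'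
      · exact absurd rfl hne
      · exact (hcon _ hc').le
      · rw [norm_sub_rev]; exact (hcon _ hc).le
      · exact h2 _ hc _ hc' hne
  have := Nat.le_findGreatest (hb _ hP) hP
  omega

/-- Two successive scales of the net of `exists_net` approximate a vector of norm at most `2 * r`
to within `r / 2`. -/
lemma exists_offset {d : ℕ} {S : Finset (EuclideanSpace ℝ (Fin d))}
    (hS : ∀ x : EuclideanSpace ℝ (Fin d), ‖x‖ ≤ 2 → ∃ c ∈ S, ‖x - c‖ ≤ 1)
    {r : ℝ} (hr : 0 < r) (v : EuclideanSpace ℝ (Fin d)) (hv : ‖v‖ ≤ 2 * r) :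
    ∃ c : S × S, ‖v - (r • c.1.1 + (r / 2) • c.2.1)‖ ≤ r / 2 := by
  obtain ⟨c, hc, h1⟩ := hS (r⁻¹ • v) (by
    rw [norm_smul, Real.norm_of_nonneg (by positivity), inv_mul_le_iff₀ hr]; linarith)
  have e1 : v - r • c = r • (r⁻¹ • v - c) := by
    rw [smul_sub, smul_smul, mul_inv_cancel₀ hr.ne', one_smul]
  have h1' : ‖v - r • c‖ ≤ r := by
    rw [e1, norm_smul, Real.norm_of_nonneg hr.le]; nlinarith
  have hr2 : (0 : ℝ) < r / 2 := by positivity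
  obtain ⟨c', hc', h2⟩ := hS ((r / 2)⁻¹ • (v - r • c)) (by
    rw [norm_smul, Real.norm_of_nonneg (by positivity), inv_mul_le_iff₀ hr2]; linarith)
  refine ⟨(⟨c, hc⟩, ⟨c', hc'⟩), ?_⟩
  have e2 : v - (r • c + (r / 2) • c') = (r / 2) • ((r / 2)⁻¹ • (v - r • c) - c') := by
    rw [smul_sub, smul_smul, mul_inv_cancel₀ hr2.ne', one_smul, sub_add_eq_sub_sub]
  simp only
  rw [e2, norm_smul, Real.norm_of_nonneg hr2.le]
  nlinarith

/-- the space of complexity-`z` polygonal curves in `ℝ^d` under the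
discrete Fréchet distance has doubling dimension `O(dz)`: every ball of radius `r`
can be covered by `2^{C·d·z}` balls of radius `r/2`. -/
theorem stmt15 :
    ∃ C : ℝ, 0 < C ∧
      ∀ (d z : ℕ), 1 ≤ d → 1 ≤ z →
        ∀ (π : ℕ → EuclideanSpace ℝ (Fin d)) (r : ℝ), 0 < r →
          ∃ (N : ℕ) (σ : ℕ → ℕ → EuclideanSpace ℝ (Fin d)),
            (N : ℝ) ≤ 2 ^ (C * d * z) ∧
            ∀ τ : ℕ → EuclideanSpace ℝ (Fin d),
              dFrechet z z π τ ≤ r →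
              ∃ i : ℕ, 1 ≤ i ∧ i ≤ N ∧ dFrechet z z (σ i) τ ≤ r / 2 := by
  -- `7` comes from `4 * 25 ≤ 2 ^ 7`.
  refine ⟨7, by norm_num, fun d z hd hz π r hr => ?_⟩
  obtain ⟨S, hcard, hS⟩ := exists_net d
  let ι := (Fin z →o Fin z) × (Fin z → S × S)
  have : Finite (Fin z →o Fin z) := Finite.of_injective _ DFunLike.coe_injective
  let e : ι ≃ Fin (Nat.card ι) := Finite.equivFin ι
  -- Curves are indexed from 1, and so is the family `σ`; values outside the range are irrelevant.
  let curve (x : ι) (n : ℕ) : EuclideanSpace ℝ (Fin d) :=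
    if h : n - 1 < z then
      π (x.1 ⟨n - 1, h⟩ + 1) + (r • (x.2 ⟨n - 1, h⟩).1.1 + (r / 2) • (x.2 ⟨n - 1, h⟩).2.1)
    else 0
  refine ⟨Nat.card ι, fun i => if h : i - 1 < Nat.card ι then curve (e.symm ⟨i - 1, h⟩) else 0,
    ?_, fun τ hτ => ?_⟩
  · have h1 : Nat.card ι ≤ 4 ^ z * (5 ^ d * 5 ^ d) ^ z := by
      simp only [ι, Nat.card_prod, Nat.card_fun, Nat.card_eq_fintype_card (α := S),
        Fintype.card_coe, Nat.card_eq_fintype_card (α := Fin z), Fintype.card_fin]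
      exact Nat.mul_le_mul (card_orderHom_le z)
        (Nat.pow_le_pow_left (Nat.mul_le_mul hcard hcard) z)
    have h2 : 4 ^ z * (5 ^ d * 5 ^ d) ^ z ≤ 2 ^ (7 * d * z) := by
      rw [← mul_pow, pow_mul 2 (7 * d) z, pow_mul 2 7 d]
      refine Nat.pow_le_pow_left ?_ z
      calc 4 * (5 ^ d * 5 ^ d) ≤ 4 ^ d * (5 ^ d * 5 ^ d) :=
            Nat.mul_le_mul_right _ (Nat.le_self_pow (by omega) 4)
        _ = 100 ^ d := by rw [← mul_pow, ← mul_pow]; norm_num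
        _ ≤ (2 ^ 7) ^ d := Nat.pow_le_pow_left (by norm_num) d
    calc (Nat.card ι : ℝ) ≤ ((2 ^ (7 * d * z) : ℕ) : ℝ) := by exact_mod_cast h1.trans h2
      _ = 2 ^ ((7 : ℝ) * d * z) := by
        rw [Nat.cast_pow, ← Real.rpow_natCast]; push_cast; rfl
  · obtain ⟨f, hf⟩ := exists_monotone_of_dFrechet_lt z hz π τ (2 * r) (by linarith)
    choose c hc using fun j : Fin z => exists_offset hS hr (τ (j + 1) - π (f j + 1))
      (by rw [← dist_eq_norm, dist_comm]; exact hf j)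
    let x : ι := (f, c)
    refine ⟨e x + 1, by omega, (e x).2, ?_⟩
    dsimp only
    rw [dif_pos (show (e x : ℕ) + 1 - 1 < Nat.card ι from (e x).2)]
    have hx : e.symm ⟨(e x : ℕ) + 1 - 1, (e x).2⟩ = x := e.symm_apply_apply x
    rw [hx]
    refine dFrechet_le_of_forall_dist_le z hz _ _ _ (by positivity) fun k hk => ?_
    have := hc ⟨k, hk⟩
    simp only [curve, Nat.add_sub_cancel, hk, dif_pos, x]
    rwa [dist_comm, dist_eq_norm, ← sub_sub]
end
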